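/- arXiv:math/9903201 — 7 statements merged into one kernel-verified Lean document; each statement's English description precedes it below -/
import Mathlib

section
/- Let B and B' be complex Banach spaces and let i : B' → B be a compact injective continuous linear map. Let U be an open neighborhood of 0 in B and let T : U → B' be a complex analytic map with T(0) = 0; set R = i ∘ T : U → B, so R(0) = 0. Assume that the spectrum of the bounded operator DR(0) : B → B is contained in the closed unit disk of ℂ and has nonempty intersection with the unit circle. Then R has slow small orbits: for every neighborhood V of 0 with V ⊆ U there exists f ∈ V such that R^m f ∈ V and R^m f ≠ 0 for all m ≥ 0, and (1/m)·log ‖R^m f‖ → 0 as m → ∞. -/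
open Filter Metric

lemma so_det_norm {E : Type*} [NormedAddCommGroup E] [NormedSpace ℂ E] [FiniteDimensional ℂ E]
    (f : E →ₗ[ℂ] E) (h : ∀ (μ : ℂ) (v : E), v ≠ 0 → f v = μ • v → ‖μ‖ = 1) :
    ‖LinearMap.det f‖ = 1 := by
  rw [Module.End.det_eq_prod_roots_charpoly_of_splits (f := f) (IsAlgClosed.splits _)]
  have : ‖f.charpoly.roots.prod‖ = (f.charpoly.roots.map (fun x => ‖x‖)).prod :=
    map_multiset_prod (normHom : ℂ →*₀ ℝ) _
  rw [this]
  apply Multiset.prod_eq_one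
  intro x hx
  obtain ⟨μ, hμ, rfl⟩ := Multiset.mem_map.1 hx
  have h1 := Polynomial.isRoot_of_mem_roots hμ
  have h2 := (Module.End.hasEigenvalue_iff_isRoot_charpoly f μ).2 h1
  obtain ⟨v, hv⟩ := h2.exists_hasEigenvector
  exact h μ v hv.2 hv.apply_eq_smul

lemma so_vol_bound {E : Type*} [NormedAddCommGroup E] [NormedSpace ℂ E] [FiniteDimensional ℂ E]
    (f : E →ₗ[ℂ] E) (hf : ‖LinearMap.det f‖ = 1) (s : Finset E)
    (hs : f '' ball 0 1 ⊆ ⋃ c ∈ s, closedBall c (1/2)) :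
    (2:ℝ) ^ (Module.finrank ℂ E) ≤ s.card := by
  letI : MeasurableSpace E := borel E
  haveI : BorelSpace E := ⟨rfl⟩
  haveI : FiniteDimensional ℝ E := FiniteDimensional.complexToReal E
  let μ : MeasureTheory.Measure E := MeasureTheory.Measure.addHaar
  have h1 : μ ((f.restrictScalars ℝ) '' ball 0 1) = μ (ball 0 1) := by
    rw [MeasureTheory.Measure.addHaar_image_linearMap, LinearMap.det_restrictScalars]
    simp [Algebra.norm_complex_eq, Complex.normSq_eq_norm_sq, hf]
  have h2 : μ (ball (0:E) 1) ≤ ∑ c ∈ s, μ (closedBall c (1/2)) := by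
    rw [← h1]
    exact (MeasureTheory.measure_mono hs).trans (MeasureTheory.measure_biUnion_finset_le _ _)
  have h3 : ∀ c : E, μ (closedBall c (1/2)) =
      ENNReal.ofReal ((1/2) ^ Module.finrank ℝ E) * μ (ball 0 1) := fun c =>
    MeasureTheory.Measure.addHaar_closedBall μ c (by norm_num)
  simp only [h3, Finset.sum_const, nsmul_eq_mul] at h2
  have hpos : μ (ball (0:E) 1) ≠ 0 := (measure_ball_pos μ _ one_pos).ne'
  have hfin : μ (ball (0:E) 1) ≠ ⊤ := MeasureTheory.measure_ball_lt_top.ne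
  rw [← mul_assoc] at h2
  have h4 : 1 ≤ (s.card : ENNReal) * ENNReal.ofReal ((1/2) ^ Module.finrank ℝ E) := by
    by_contra hlt
    push Not at hlt
    have := ENNReal.mul_lt_mul_left hpos hfin hlt
    rw [one_mul] at this
    exact absurd h2 (not_le.2 this)
  have h5 : (1:ℝ) ≤ s.card * (1/2) ^ Module.finrank ℝ E := by
    have := ENNReal.toReal_mono (by finiteness) h4
    simpa using this
  have h6 : Module.finrank ℝ E = 2 * Module.finrank ℂ E := finrank_real_of_complex E
  have h7 : (2:ℝ) ^ Module.finrank ℝ E ≤ s.card := by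
    rw [one_div, inv_pow, ← div_eq_mul_inv, le_div_iff₀ (by positivity), one_mul] at h5
    exact h5
  refine le_trans ?_ h7
  exact pow_le_pow_right₀ (by norm_num) (by omega)

def SoGood {B : Type*} [NormedAddCommGroup B] [NormedSpace ℂ B] (A : B →L[ℂ] B)
    (N : Submodule ℂ B) : Prop :=
  FiniteDimensional ℂ N ∧ (∀ x ∈ N, A x ∈ N) ∧
    ∀ v ∈ N, v ≠ 0 → ∀ μ : ℂ, A v = μ • v → ‖μ‖ = 1

lemma so_dim_bound {B : Type*} [NormedAddCommGroup B] [NormedSpace ℂ B]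
    (A : B →L[ℂ] B) (hA : IsCompactOperator A) :
    ∃ D : ℕ, ∀ N : Submodule ℂ B, SoGood A N → Module.finrank ℂ N ≤ D := by
  have htb : TotallyBounded (A '' ball 0 1) :=
    (hA.isCompact_closure_image_ball (f := (A : B →ₗ[ℂ] B)) 1).totallyBounded.subset subset_closure
  obtain ⟨t, ht, hcov⟩ := Metric.totallyBounded_iff.1 htb (1/4) (by norm_num)
  refine ⟨ht.toFinset.card, fun N ⟨hfd, hinv, heig⟩ => ?_⟩
  let f : N →ₗ[ℂ] N := (A : B →ₗ[ℂ] B).restrict hinv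
  have hdet : ‖LinearMap.det f‖ = 1 := by
    apply so_det_norm
    intro μ v hv h
    exact heig v v.2 (by simpa using hv) μ (by simpa [f] using congrArg Subtype.val h)
  classical
  let c : B → N := fun y => if h : ∃ x : N, dist (x:B) y < 1/4 then h.choose else 0
  have key := so_vol_bound f hdet (ht.toFinset.image c) (by
    rintro _ ⟨x, hx, rfl⟩
    have : A x ∈ A '' ball 0 1 := ⟨x, by simpa using hx, rfl⟩
    obtain ⟨y, hy, hxy⟩ := Set.mem_iUnion₂.1 (hcov this)
    refine Set.mem_iUnion₂.2 ⟨c y, Finset.mem_image_of_mem _ (by simpa using hy), ?_⟩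
    have hex : ∃ x : N, dist (x:B) y < 1/4 := ⟨f x, hxy⟩
    have hc : dist ((c y : N) : B) y < 1/4 := by
      simp only [c, dif_pos hex]; exact hex.choose_spec
    rw [mem_closedBall, Subtype.dist_eq]
    have h1 : dist ((f x : N) : B) y < 1/4 := hxy
    have := dist_triangle_right ((f x : N) : B) (c y) y
    linarith)
  have h2 : (2:ℝ) ^ (Module.finrank ℂ N) ≤ ht.toFinset.card :=
    key.trans (by exact_mod_cast Finset.card_image_le)
  have h3 : 2 ^ (Module.finrank ℂ N) ≤ ht.toFinset.card := by exact_mod_cast h2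
  exact (Nat.lt_two_pow_self).le.trans h3

lemma so_ker_fd {B : Type*} [NormedAddCommGroup B] [NormedSpace ℂ B]
    (S K : B →L[ℂ] B) (c : ℂ) (hc : c ≠ 0) (hK : IsCompactOperator K) (h : S = K + c • 1) :
    FiniteDimensional ℂ (LinearMap.ker (S : B →ₗ[ℂ] B)) := by
  have hmem : ∀ v ∈ LinearMap.ker (S : B →ₗ[ℂ] B), K v = (-c) • v := by
    intro v hv
    have : S v = 0 := hv
    rw [h] at this
    simp at this
    rw [neg_smul]
    exact eq_neg_of_add_eq_zero_left this
  have hmaps : ∀ v ∈ LinearMap.ker (S : B →ₗ[ℂ] B),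
      (K : B →ₗ[ℂ] B) v ∈ LinearMap.ker (S : B →ₗ[ℂ] B) := by
    intro v hv
    have := hmem v hv
    show K v ∈ _
    rw [this]
    exact Submodule.smul_mem _ _ hv
  have hcl : IsClosed (LinearMap.ker (S : B →ₗ[ℂ] B) : Set B) := S.isClosed_ker
  have h1 := IsCompactOperator.restrict (f := (K : B →ₗ[ℂ] B)) hK hmaps hcl
  apply FiniteDimensional.of_isCompactOperator_id (𝕜 := ℂ)
  have h2 := h1.smul ((-c)⁻¹)
  have h3 : (id : LinearMap.ker (S : B →ₗ[ℂ] B) → LinearMap.ker (S : B →ₗ[ℂ] B)) =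
      (-c)⁻¹ • ⇑((K : B →ₗ[ℂ] B).restrict hmaps) := by
    funext v
    apply Subtype.ext
    have := hmem v v.2
    simp [this, hc]
  rw [h3]
  exact h2

lemma so_aeval_eig {B : Type*} [NormedAddCommGroup B] [NormedSpace ℂ B]
    (A : B →L[ℂ] B) (p : Polynomial ℂ) (v : B) (l : ℂ) (h : A v = l • v) :
    (Polynomial.aeval A p) v = p.eval l • v := by
  induction p using Polynomial.induction_on' with
  | add p q hp hq => simp [hp, hq, add_smul]
  | monomial n a =>
    have : ∀ n : ℕ, (A ^ n) v = l ^ n • v := by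
      intro n
      induction n with
      | zero => simp
      | succ n ih => rw [pow_succ', mul_apply_eq_comp, ih, map_smul, h, smul_smul,
          pow_succ]
    simp [Polynomial.aeval_monomial, this, Algebra.algebraMap_eq_smul_one, smul_smul]

lemma so_aeval_restrict {B : Type*} [NormedAddCommGroup B] [NormedSpace ℂ B]
    (A : B →L[ℂ] B) (N : Submodule ℂ B) (f : N →ₗ[ℂ] N) (hf : ∀ n : N, (f n : B) = A n)
    (p : Polynomial ℂ) (v : N) :
    (Polynomial.aeval A p) (v : B) = ((Polynomial.aeval f p) v : N) := by
  induction p using Polynomial.induction_on' with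
  | add p q hp hq => simp [hp, hq]
  | monomial n a =>
    have : ∀ n : ℕ, (A ^ n) (v : B) = ((f ^ n) v : N) := by
      intro n
      induction n with
      | zero => simp
      | succ n ih => rw [pow_succ', mul_apply_eq_comp, ih, pow_succ',
          Module.End.mul_apply, hf]
    simp [Polynomial.aeval_monomial, this, Algebra.algebraMap_eq_smul_one]

lemma so_split {B : Type*} [NormedAddCommGroup B] [NormedSpace ℂ B] [CompleteSpace B]
    (A : B →L[ℂ] B) (hA : IsCompactOperator A) :
    ∃ N : Submodule ℂ B, SoGood A N ∧ ∃ P : B →L[ℂ] N, (∀ n : N, P n = n) ∧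
      (∀ v, (P (A v) : B) = A (P v)) ∧
      (∀ v, P v = 0 → v ≠ 0 → ∀ μ : ℂ, A v = μ • v → ‖μ‖ ≠ 1) := by
  obtain ⟨D, hD⟩ := so_dim_bound A hA
  obtain ⟨N, hN, hmax⟩ : ∃ N : Submodule ℂ B, SoGood A N ∧
      ∀ N' : Submodule ℂ B, SoGood A N' → Module.finrank ℂ N' ≤ Module.finrank ℂ N := by
    let s : Set ℕ := {n | ∃ N : Submodule ℂ B, SoGood A N ∧ Module.finrank ℂ N = n}
    have hs : s.Nonempty := by
      refine ⟨_, ⊥, ⟨inferInstance, ?_, ?_⟩, rfl⟩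
      · intro x hx
        rw [Submodule.mem_bot] at hx ⊢
        simp [hx]
      · intro v hv hv0
        exact absurd ((Submodule.mem_bot ℂ).1 hv) hv0
    have hb : BddAbove s := ⟨D, by rintro _ ⟨N, hN, rfl⟩; exact hD N hN⟩
    obtain ⟨N, hN, hNs⟩ := Nat.sSup_mem hs hb
    exact ⟨N, hN, fun N' hN' => hNs ▸ le_csSup hb ⟨N', hN', rfl⟩⟩
  have hmax' : ∀ N' : Submodule ℂ B, SoGood A N' → N ≤ N' → N' ≤ N := by
    intro N' hN' hle
    have := hN'.1
    exact (Submodule.eq_of_le_of_finrank_le hle (hmax N' hN')).ge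
  refine ⟨N, hN, ?_⟩
  obtain ⟨hfd, hinv, heig⟩ := hN
  let f : N →ₗ[ℂ] N := (A : B →ₗ[ℂ] B).restrict hinv
  have hf : ∀ n : N, (f n : B) = A n := fun n => rfl
  let q := f.charpoly
  have hroot : ∀ l, q.eval l = 0 → ‖l‖ = 1 := by
    intro l hl
    have h2 := (Module.End.hasEigenvalue_iff_isRoot_charpoly f l).2 hl
    obtain ⟨v, hv⟩ := h2.exists_hasEigenvector
    refine heig v v.2 (by simpa using hv.2) l ?_
    rw [← hf, hv.apply_eq_smul]; rfl
  let c := q.coeff 0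
  have hc : c ≠ 0 := by
    intro h
    have := hroot 0 (by rw [← Polynomial.coeff_zero_eq_eval_zero]; exact h)
    simp at this
  let T : B →L[ℂ] B := Polynomial.aeval A q
  let K : B →L[ℂ] B := A * Polynomial.aeval A q.divX
  have hK : IsCompactOperator K := hA.comp_clm (Polynomial.aeval A q.divX)
  have hT : T = K + c • 1 := by
    have := congrArg (Polynomial.aeval A) (Polynomial.X_mul_divX_add q)
    simp only [map_add, map_mul, Polynomial.aeval_X, Polynomial.aeval_C] at this
    rw [← Algebra.algebraMap_eq_smul_one]
    exact this.symm
  have hcomm : ∀ v, T (A v) = A (T v) := by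
    intro v
    have : T * A = A * T := by
      have := Polynomial.aeval_X (R := ℂ) A
      calc T * A = Polynomial.aeval A (q * Polynomial.X) := by simp [T]
        _ = Polynomial.aeval A (Polynomial.X * q) := by rw [mul_comm]
        _ = _ := by simp [T]
    exact congrArg (fun g : B →L[ℂ] B => g v) this
  have hTN : ∀ n ∈ N, T n = 0 := by
    intro n hn
    have := so_aeval_restrict A N f hf q ⟨n, hn⟩
    rw [LinearMap.aeval_self_charpoly] at this
    simpa using this
  have hker2 : ∀ v, T (T v) = 0 → v ∈ N := by
    have hg : SoGood A (LinearMap.ker ((T * T : B →L[ℂ] B) : B →ₗ[ℂ] B)) := by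
      refine ⟨?_, ?_, ?_⟩
      · apply so_ker_fd (T * T) (K * K + (2 * c) • K) (c * c) (mul_ne_zero hc hc)
        · have h1 : IsCompactOperator ((K * K : B →L[ℂ] B)) := hK.comp_clm K
          have h2 : IsCompactOperator (((2 * c) • K : B →L[ℂ] B)) := hK.smul (2 * c)
          exact h1.add h2
        · rw [hT]
          ext v
          simp [smul_smul, two_mul, add_smul]
          abel
      · intro x hx
        have hx' : T (T x) = 0 := hx
        show T (T (A x)) = 0
        rw [hcomm, hcomm, hx', map_zero]
      · intro v hv hv0 l hl
        have hv' : T (T v) = 0 := hv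
        have h1 : T v = q.eval l • v := so_aeval_eig A q v l hl
        rw [h1, map_smul, h1, smul_smul] at hv'
        have := (smul_eq_zero.1 hv').resolve_right hv0
        exact hroot l (by simpa using this)
    have := hmax' _ hg (fun n hn => by
      show T (T n) = 0
      rw [hTN n hn, map_zero])
    intro v hv
    exact this hv
  obtain ⟨p, hp⟩ := Submodule.ClosedComplemented.of_finiteDimensional N
  let p' : B →L[ℂ] B := N.subtypeL.comp p
  have hp'N : ∀ n ∈ N, p' n = n := fun n hn => by simp [p', hp ⟨n, hn⟩]
  have hp'mem : ∀ v, p' v ∈ N := fun v => (p v).2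
  have hpc : IsCompactOperator p := by
    have : ProperSpace N := FiniteDimensional.proper_rclike ℂ N
    have : LocallyCompactSpace N := inferInstance
    have h1 : IsCompactOperator (id : N → N) :=
      isCompactOperator_id_iff_locallyCompactSpace.2 this
    exact h1.comp_clm p
  have hp'c : IsCompactOperator p' := hpc.clm_comp N.subtypeL
  have hunit : IsUnit (T + p') := by
    have hKp : IsCompactOperator (K + p' : B →L[ℂ] B) := hK.add hp'c
    rcases hKp.hasEigenvalue_or_mem_resolventSet (μ := -c) (neg_ne_zero.2 hc) with h | h
    · exfalso
      obtain ⟨v, hv⟩ := h.exists_hasEigenvector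
      have h1 : K v + p' v = (-c) • v := hv.apply_eq_smul
      have h2 : T v + p' v = 0 := by
        rw [hT]
        simp only [add_apply, smul_apply,
          one_apply_eq_self]
        rw [add_right_comm, h1]; simp
      have h3 : T (T v) = 0 := by
        rw [eq_neg_of_add_eq_zero_left h2, map_neg, hTN _ (hp'mem v), neg_zero]
      have h4 := hker2 v h3
      rw [hTN v h4, zero_add, hp'N v h4] at h2
      exact hv.2 h2
    · rw [spectrum.mem_resolventSet_iff, ← IsUnit.neg_iff] at h
      convert h using 1
      rw [hT, Algebra.algebraMap_eq_smul_one]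
      module
  obtain ⟨u, hu⟩ := hunit
  let W : B →L[ℂ] B := (u⁻¹ : (B →L[ℂ] B)ˣ)
  have hW1 : ∀ v, W (T v + p' v) = v := by
    intro v
    have := congrArg (fun g : B →L[ℂ] B => g v) (u.inv_mul)
    simpa [hu] using this
  have hW2 : ∀ v, T (W v) + p' (W v) = v := by
    intro v
    have := congrArg (fun g : B →L[ℂ] B => g v) (u.mul_inv)
    simpa [hu] using this
  have hPN : ∀ n ∈ N, p' (W n) = n := by
    intro n hn
    have := hW1 n
    rw [hTN n hn, zero_add, hp'N n hn] at this
    rw [this, hp'N n hn]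
  have hPT : ∀ w, p' (W (T w)) = 0 := by
    intro w
    have := hW1 (w - p' w)
    rw [map_sub, map_sub, hTN _ (hp'mem w), hp'N _ (hp'mem w), sub_zero, sub_self, add_zero] at this
    rw [this, map_sub, hp'N _ (hp'mem w), sub_self]
  have hPA : ∀ v, p' (W (A v)) = A (p' (W v)) := by
    intro v
    have h1 := hW2 v
    conv_lhs => rw [← h1]
    rw [map_add, ← hcomm, map_add, map_add, hPT, zero_add, hPN _ (hinv _ (hp'mem _))]
  refine ⟨p.comp W, ?_, ?_, ?_⟩
  · intro n
    exact Subtype.ext (hPN n n.2)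
  · intro v
    exact hPA v
  · intro v hPv hv0 l hl hl1
    have hPv' : p' (W v) = 0 := by
      have := congrArg (Subtype.val) hPv
      exact this
    have hvN : v ∉ N := by
      intro h
      rw [hPN v h] at hPv'
      exact hv0 hPv'
    have hg : SoGood A (N ⊔ Submodule.span ℂ {v}) := by
      refine ⟨inferInstance, ?_, ?_⟩
      · intro x hx
        obtain ⟨n, hn, y, hy, rfl⟩ := Submodule.mem_sup.1 hx
        obtain ⟨a, rfl⟩ := Submodule.mem_span_singleton.1 hy
        rw [map_add, map_smul, hl]
        exact Submodule.add_mem_sup (hinv n hn) (Submodule.smul_mem _ _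
          (Submodule.smul_mem _ _ (Submodule.mem_span_singleton_self v)))
      · intro x hx hx0 k hk
        obtain ⟨n, hn, y, hy, rfl⟩ := Submodule.mem_sup.1 hx
        obtain ⟨a, rfl⟩ := Submodule.mem_span_singleton.1 hy
        have hn1 : p' (W (n + a • v)) = n := by
          rw [map_add, map_add, hPN n hn, map_smul, map_smul, hPv', smul_zero, add_zero]
        have h1 : A n = k • n := by
          have := hPA (n + a • v)
          rw [hk, map_smul, map_smul, hn1] at this
          exact this.symm
        by_cases hn0 : n = 0
        · subst hn0
          have ha : a ≠ 0 := by rintro rfl; simp at hx0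
          rw [zero_add, map_smul, hl, smul_comm] at hk
          have : l = k := by
            have h2 : (l - k) • (a • v) = 0 := by rw [sub_smul, hk, sub_self]
            rcases smul_eq_zero.1 h2 with h3 | h3
            · exact sub_eq_zero.1 h3
            · simp [ha, hv0] at h3
          rw [← this, hl1]
        · exact heig n hn hn0 k h1
    exact hvN (hmax' _ hg le_sup_left (Submodule.mem_sup_right (Submodule.mem_span_singleton_self v)))

lemma so_adapt {E : Type*} [NormedAddCommGroup E] [NormedSpace ℂ E] [CompleteSpace E]
    [Nontrivial E] (C : E →L[ℂ] E) (a : ℝ) (ha : 0 < a) (h : ∀ z ∈ spectrum ℂ C, ‖z‖ < a) :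
    ∃ α : Seminorm ℂ E, ∃ K : ℝ, 0 < K ∧ (∀ x, ‖x‖ ≤ α x) ∧ (∀ x, α x ≤ K * ‖x‖) ∧
      ∀ x, α (C x) ≤ a * α x := by
  obtain ⟨n, hn, hCn⟩ : ∃ n : ℕ, 1 ≤ n ∧ ‖C ^ n‖ ≤ a ^ n := by
    have h1 : spectralRadius ℂ C < ENNReal.ofReal a := by
      have := spectrum.spectralRadius_lt_of_forall_lt C (r := a.toNNReal) (by
        intro z hz
        rw [← NNReal.coe_lt_coe, Real.coe_toNNReal _ ha.le]
        exact h z hz)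
      exact this
    have h2 := spectrum.pow_norm_pow_one_div_tendsto_nhds_spectralRadius C
    obtain ⟨n, hn, hn1⟩ := ((h2.eventually_lt_const h1).and (eventually_ge_atTop 1)).exists
    refine ⟨n, hn1, ?_⟩
    have h3 := (ENNReal.ofReal_lt_ofReal_iff ha).1 hn
    have hn0 : (n : ℝ) ≠ 0 := by positivity
    have h4 : (‖C ^ n‖ ^ (1 / (n:ℝ))) ^ n = ‖C ^ n‖ := by
      rw [← Real.rpow_natCast, ← Real.rpow_mul (norm_nonneg _), one_div, inv_mul_cancel₀ hn0,
        Real.rpow_one]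
    rw [← h4]
    exact pow_le_pow_left₀ (by positivity) h3.le n
  let F : E → ℝ := fun x => ∑ k ∈ Finset.range n, a⁻¹ ^ k * ‖(C ^ k) x‖
  let α : Seminorm ℂ E := Seminorm.of F (by
      intro x y
      simp only [F]
      rw [← Finset.sum_add_distrib]
      apply Finset.sum_le_sum
      intro k _
      rw [map_add, ← mul_add]
      exact mul_le_mul_of_nonneg_left (norm_add_le _ _) (by positivity)) (by
      intro c x
      simp only [F]
      rw [Finset.mul_sum]
      apply Finset.sum_congr rfl
      intro k _
      rw [map_smul, norm_smul]; ring)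
  have hα : ∀ x, α x = ∑ k ∈ Finset.range n, a⁻¹ ^ k * ‖(C ^ k) x‖ := fun x => rfl
  refine ⟨α, ∑ k ∈ Finset.range n, a⁻¹ ^ k * ‖C ^ k‖ + 1, ?_, ?_, ?_, ?_⟩
  · positivity
  · intro x
    rw [hα]
    have := Finset.single_le_sum (f := fun k => a⁻¹ ^ k * ‖(C ^ k) x‖)
      (fun k _ => by positivity) (Finset.mem_range.2 hn)
    simpa using this
  · intro x
    rw [hα, add_mul, Finset.sum_mul]
    have : ∑ k ∈ Finset.range n, a⁻¹ ^ k * ‖(C ^ k) x‖ ≤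
        ∑ k ∈ Finset.range n, a⁻¹ ^ k * ‖C ^ k‖ * ‖x‖ := by
      apply Finset.sum_le_sum
      intro k _
      rw [mul_assoc]
      exact mul_le_mul_of_nonneg_left ((C ^ k).le_opNorm x) (by positivity)
    have h0 := norm_nonneg x
    linarith
  · intro x
    have h1 : ∀ m, ∑ k ∈ Finset.range m, a⁻¹ ^ k * ‖(C ^ k) (C x)‖ =
        a * (∑ k ∈ Finset.range (m+1), a⁻¹ ^ k * ‖(C ^ k) x‖ - ‖x‖) := by
      intro m
      rw [Finset.sum_range_succ', mul_sub, mul_add, Finset.mul_sum]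
      simp only [pow_zero, one_mul, one_apply_eq_self, add_sub_cancel_right]
      apply Finset.sum_congr rfl
      intro k _
      rw [pow_succ C, mul_apply_eq_comp, pow_succ]
      field_simp
    rw [hα, hα, h1, Finset.sum_range_succ]
    apply mul_le_mul_of_nonneg_left _ ha.le
    have : a⁻¹ ^ n * ‖(C ^ n) x‖ ≤ ‖x‖ := by
      rw [inv_pow, inv_mul_le_iff₀ (by positivity)]
      exact ((C ^ n).le_opNorm x).trans (mul_le_mul_of_nonneg_right hCn (norm_nonneg _))
    linarith

lemma so_adaptN {E : Type*} [NormedAddCommGroup E] [NormedSpace ℂ E] [FiniteDimensional ℂ E]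
    [Nontrivial E] (f : E →L[ℂ] E)
    (h : ∀ (μ : ℂ) (v : E), v ≠ 0 → f v = μ • v → ‖μ‖ = 1) (a : ℝ) (ha : 1 < a) :
    ∃ α : Seminorm ℂ E, ∃ K : ℝ, 0 < K ∧ (∀ x, ‖x‖ ≤ α x) ∧ (∀ x, α x ≤ K * ‖x‖) ∧
      ∀ x, α x ≤ a * α (f x) := by
  have : CompleteSpace E := FiniteDimensional.complete ℂ E
  have hinj : Function.Injective f := by
    rw [injective_iff_map_eq_zero]
    intro v hv
    by_contra hv0
    have := h 0 v hv0 (by simp [hv])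
    simp at this
  have hbij : Function.Bijective f :=
    ⟨hinj, LinearMap.surjective_of_injective (f := (f : E →ₗ[ℂ] E)) hinj⟩
  obtain ⟨u, hu⟩ := ContinuousLinearMap.isUnit_iff_bijective.2 hbij
  obtain ⟨α, K, hK, h1, h2, h3⟩ := so_adapt ((u⁻¹ : (E →L[ℂ] E)ˣ) : E →L[ℂ] E) a (by linarith) (by
    intro z hz
    have hz0 : z ≠ 0 := spectrum.ne_zero_of_mem_of_unit hz
    have hz1 : z⁻¹ ∈ spectrum ℂ f := by
      rw [← hu]
      exact spectrum.inv₀_mem_iff.2 hz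
    rw [ContinuousLinearMap.spectrum_eq, ← Module.End.hasEigenvalue_iff_mem_spectrum] at hz1
    obtain ⟨v, hv⟩ := hz1.exists_hasEigenvector
    have := h _ v hv.2 hv.apply_eq_smul
    rw [norm_inv, inv_eq_one] at this
    rwa [this])
  refine ⟨α, K, hK, h1, h2, fun x => ?_⟩
  have h4 := h3 (f x)
  have h5 := congrArg (fun g : E →L[ℂ] E => g x) (u.inv_mul)
  simp only [hu, mul_apply_eq_comp, one_apply_eq_self] at h5
  rwa [h5] at h4

structure SoData {B : Type*} [NormedAddCommGroup B] [NormedSpace ℂ B]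
    (N : Submodule ℂ B) (P : B →L[ℂ] N) (α : Seminorm ℂ N) (β : Seminorm ℂ B)
    (R : B → B) (A : B →L[ℂ] B) (W Q : Set B) (K r κ : ℝ) (e : N) (μ : ℂ) : Prop where
  fd : FiniteDimensional ℂ N
  hP : ∀ n : N, P n = n
  hα1 : ∀ x, ‖x‖ ≤ α x
  hα2 : ∀ x, α x ≤ K * ‖x‖
  hβ : ∀ x, β x ≤ K * ‖x‖
  hβN : ∀ x : N, β x = 0
  hnorm : ∀ v, ‖v‖ ≤ K * max (α (P v)) (β v)
  hr : 0 < r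
  hκ : 0 < κ
  hκ1 : κ ≤ 1
  hW : ∀ p, p ∈ W ↔ α (P p) ≤ r ∧ β p ≤ r
  hcone : ∀ p ∈ W, ∀ q ∈ W, β (p - q) ≤ α (P (p - q)) →
    β (R p - R q) ≤ α (P (R p - R q)) ∧ κ * α (P (p - q)) ≤ α (P (R p - R q))
  hR0 : R 0 = 0
  hRan : ∀ p ∈ W, AnalyticAt ℂ R p
  hQ : IsCompact Q
  hRQ : ∀ p ∈ W, R p ∈ Q
  hA : HasFDerivAt R A 0
  he : A e = μ • (e : B)
  hμ : ‖μ‖ = 1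
  hαe : α e = 1

namespace SoData

variable {B : Type*} [NormedAddCommGroup B] [NormedSpace ℂ B]
    {N : Submodule ℂ B} {P : B →L[ℂ] N} {α : Seminorm ℂ N} {β : Seminorm ℂ B}
    {R : B → B} {A : B →L[ℂ] B} {W Q : Set B} {K r κ : ℝ} {e : N} {μ : ℂ}

lemma contα (h : SoData N P α β R A W Q K r κ e μ) : Continuous α := by
  have hc : Continuous fun x : N => K * ‖x‖ := by fun_prop
  apply Seminorm.continuous_of_le (q := (K.toNNReal) • normSeminorm ℂ N)
  · have : (fun x : N => (K.toNNReal • normSeminorm ℂ N) x) = fun x => (K.toNNReal : ℝ) * ‖x‖ := by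
      funext x; rfl
    show Continuous (fun x : N => (K.toNNReal • normSeminorm ℂ N) x)
    rw [this]; fun_prop
  · intro x
    show α x ≤ (K.toNNReal : ℝ) * ‖x‖
    exact (h.hα2 x).trans (mul_le_mul_of_nonneg_right (Real.le_coe_toNNReal K) (norm_nonneg _))

lemma contβ (h : SoData N P α β R A W Q K r κ e μ) : Continuous β := by
  apply Seminorm.continuous_of_le (q := (K.toNNReal) • normSeminorm ℂ B)
  · have : (fun x : B => (K.toNNReal • normSeminorm ℂ B) x) = fun x => (K.toNNReal : ℝ) * ‖x‖ := by
      funext x; rfl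
    show Continuous (fun x : B => (K.toNNReal • normSeminorm ℂ B) x)
    rw [this]; fun_prop
  · intro x
    show β x ≤ (K.toNNReal : ℝ) * ‖x‖
    exact (h.hβ x).trans (mul_le_mul_of_nonneg_right (Real.le_coe_toNNReal K) (norm_nonneg _))

lemma closedW (h : SoData N P α β R A W Q K r κ e μ) : IsClosed W := by
  have : W = {p | α (P p) ≤ r} ∩ {p | β p ≤ r} := by ext p; exact h.hW p
  rw [this]
  exact (isClosed_le (h.contα.comp P.continuous) continuous_const).inter
    (isClosed_le h.contβ continuous_const)

lemma zeroW (h : SoData N P α β R A W Q K r κ e μ) : (0 : B) ∈ W := by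
  rw [h.hW]; simp [h.hr.le]

lemma iter0 (h : SoData N P α β R A W Q K r κ e μ) (m : ℕ) : R^[m] 0 = 0 :=
  Function.iterate_fixed h.hR0 m

lemma iter_cone (h : SoData N P α β R A W Q K r κ e μ) (m : ℕ) (p q : B)
    (hp : ∀ j < m, R^[j] p ∈ W) (hq : ∀ j < m, R^[j] q ∈ W)
    (hc : β (p - q) ≤ α (P (p - q))) :
    β (R^[m] p - R^[m] q) ≤ α (P (R^[m] p - R^[m] q)) ∧
      κ ^ m * α (P (p - q)) ≤ α (P (R^[m] p - R^[m] q)) := by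
  induction m with
  | zero => simpa using hc
  | succ m ih =>
    obtain ⟨h1, h2⟩ := ih (fun j hj => hp j (by omega)) (fun j hj => hq j (by omega))
    obtain ⟨h3, h4⟩ := h.hcone _ (hp m (by omega)) _ (hq m (by omega)) h1
    rw [Function.iterate_succ_apply', Function.iterate_succ_apply']
    refine ⟨h3, le_trans ?_ h4⟩
    rw [pow_succ', mul_assoc]
    exact mul_le_mul_of_nonneg_left h2 h.hκ.le

lemma iter_cone0 (h : SoData N P α β R A W Q K r κ e μ) (m : ℕ) (p : B)
    (hp : ∀ j < m, R^[j] p ∈ W) (hc : β p ≤ α (P p)) :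
    β (R^[m] p) ≤ α (P (R^[m] p)) ∧ κ ^ m * α (P p) ≤ α (P (R^[m] p)) := by
  have := h.iter_cone m p 0 hp (fun j _ => by rw [h.iter0]; exact h.zeroW) (by simpa using hc)
  simpa [h.iter0] using this

lemma lim_orbit (h : SoData N P α β R A W Q K r κ e μ) (m : ℕ) (u : ℕ → B) (q : B)
    (hu : Tendsto u atTop (nhds q)) (hw : ∀ j ≤ m, ∀ᶠ n in atTop, R^[j] (u n) ∈ W) :
    ∀ j ≤ m, Tendsto (fun n => R^[j] (u n)) atTop (nhds (R^[j] q)) ∧ R^[j] q ∈ W := by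
  intro j
  induction j with
  | zero =>
    intro hj
    exact ⟨hu, h.closedW.mem_of_tendsto hu (hw 0 hj)⟩
  | succ j ih =>
    intro hj
    obtain ⟨h1, h2⟩ := ih (by omega)
    have h3 : Tendsto (fun n => R^[j+1] (u n)) atTop (nhds (R^[j+1] q)) := by
      simp only [Function.iterate_succ_apply']
      exact (h.hRan _ h2).continuousAt.tendsto.comp h1
    exact ⟨h3, h.closedW.mem_of_tendsto h3 (hw _ hj)⟩

lemma lim_point (h : SoData N P α β R A W Q K r κ e μ) (c : ℝ) (hc : 0 < c) (Q' : Set B)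
    (hQ' : IsCompact Q')
    (hex : ∀ n : ℕ, ∃ q ∈ Q', β q ≤ α (P q) ∧ c ≤ α (P q) ∧ ∀ j ≤ n, R^[j] q ∈ W) :
    ∃ p, p ≠ 0 ∧ β p ≤ α (P p) ∧ ∀ j, R^[j] p ∈ W := by
  choose u hu1 hu2 hu3 hu4 using hex
  obtain ⟨q, hq, φ, hφ, hlim⟩ := hQ'.tendsto_subseq hu1
  have hαP : Continuous fun p => α (P p) := h.contα.comp P.continuous
  have h1 : β q ≤ α (P q) :=
    le_of_tendsto_of_tendsto' (h.contβ.continuousAt.tendsto.comp hlim)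
      (hαP.continuousAt.tendsto.comp hlim) (fun n => hu2 (φ n))
  have h2 : c ≤ α (P q) :=
    ge_of_tendsto' (hαP.continuousAt.tendsto.comp hlim) (fun n => hu3 (φ n))
  refine ⟨q, ?_, h1, fun j => ?_⟩
  · rintro rfl
    simp at h2; linarith
  · refine (h.lim_orbit j (u ∘ φ) q hlim (fun i hi => ?_) j le_rfl).2
    filter_upwards [eventually_ge_atTop i] with n hn
    exact hu4 (φ n) i (hn.trans (hφ.id_le n))

/-- the domain -/
def Wm (_h : SoData N P α β R A W Q K r κ e μ) (m : ℕ) : Set N :=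
  {x | ∀ j ≤ m, α (P (R^[j] x)) < r ∧ β (R^[j] x) < r}

lemma Wm_W (h : SoData N P α β R A W Q K r κ e μ) {m : ℕ} {x : N} (hx : x ∈ h.Wm m) :
    ∀ j ≤ m, R^[j] (x : B) ∈ W := fun j hj =>
  (h.hW _).2 ⟨(hx j hj).1.le, (hx j hj).2.le⟩

lemma an (h : SoData N P α β R A W Q K r κ e μ) {m : ℕ} {x : N} (hx : x ∈ h.Wm m) :
    ∀ j ≤ m, AnalyticAt ℂ (fun y : N => R^[j] (y : B)) x := by
  intro j
  induction j with
  | zero => intro _; exact N.subtypeL.analyticAt x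
  | succ j ih =>
    intro hj
    simp only [Function.iterate_succ_apply']
    exact AnalyticAt.comp (g := R) (f := fun y : N => R^[j] (y : B))
      (h.hRan _ (h.Wm_W hx j (by omega))) (ih (by omega))

lemma Wm_nhds (h : SoData N P α β R A W Q K r κ e μ) {m : ℕ} {x : N} (hx : x ∈ h.Wm m) :
    ∀ᶠ y in nhds x, y ∈ h.Wm m := by
  have : ∀ j ∈ Finset.range (m+1), ∀ᶠ y : N in nhds x,
      α (P (R^[j] y)) < r ∧ β (R^[j] y) < r := by
    intro j hj
    have hj' : j ≤ m := by simpa [Nat.lt_succ_iff] using hj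
    have hc := (h.an hx j hj').continuousAt
    have hαP : Continuous fun p => α (P p) := h.contα.comp P.continuous
    exact ((hαP.continuousAt.tendsto.comp hc).eventually_lt_const (hx j hj').1).and
      ((h.contβ.continuousAt.tendsto.comp hc).eventually_lt_const (hx j hj').2)
  have := (Filter.eventually_all_finset _).2 this
  filter_upwards [this] with y hy j hj
  exact hy j (by simpa [Nat.lt_succ_iff] using hj)

lemma phi_anti (h : SoData N P α β R A W Q K r κ e μ) {m : ℕ} {x y : N} (hx : x ∈ h.Wm m)
    (hy : y ∈ h.Wm m) : κ ^ m * α (x - y) ≤ α (P (R^[m] x) - P (R^[m] y)) := by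
  have h0 : P ((x : B) - y) = x - y := by rw [map_sub, h.hP, h.hP]
  have := (h.iter_cone m x y (fun j hj => h.Wm_W hx j hj.le) (fun j hj => h.Wm_W hy j hj.le) (by
    have := h.hβN (x - y)
    rw [Submodule.coe_sub] at this
    rw [this]
    exact apply_nonneg _ _)).2
  rwa [h0, map_sub P] at this

lemma phi_inj (h : SoData N P α β R A W Q K r κ e μ) {m : ℕ} {x y : N} (hx : x ∈ h.Wm m)
    (hy : y ∈ h.Wm m) (hxy : P (R^[m] x) = P (R^[m] y)) : x = y := by
  have h1 := h.phi_anti hx hy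
  rw [hxy, sub_self, map_zero] at h1
  have h2 : α (x - y) ≤ 0 := by
    have := pow_pos h.hκ m
    by_contra hlt
    push Not at hlt
    have := mul_pos this hlt
    linarith
  have h3 := (h.hα1 (x - y)).trans h2
  exact sub_eq_zero.1 (norm_le_zero_iff.1 h3)

lemma phi_deriv (h : SoData N P α β R A W Q K r κ e μ) {m : ℕ} {x : N} (hx : x ∈ h.Wm m) :
    ∃ L : N ≃L[ℂ] N, HasStrictFDerivAt (fun y : N => P (R^[m] y)) (L : N →L[ℂ] N) x := by
  have := h.fd
  have han : AnalyticAt ℂ (fun y : N => P (R^[m] y)) x :=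
    AnalyticAt.comp (g := P) (f := fun y : N => R^[m] (y : B)) (P.analyticAt _)
      (h.an hx m le_rfl)
  have hd := han.hasStrictFDerivAt
  set L := fderiv ℂ (fun y : N => P (R^[m] y)) x with hL
  have hlow : ∀ v, κ ^ m * α v ≤ α (L v) := by
    intro v
    have h1 : HasDerivAt (fun t : ℂ => P (R^[m] ((x + t • v : N) : B))) (L v) 0 := by
      have h2 : HasDerivAt (fun t : ℂ => x + t • v) v 0 := by
        simpa using ((hasDerivAt_id (0:ℂ)).smul_const v).const_add x
      have h3 : HasFDerivAt (fun y : N => P (R^[m] y)) L (x + (0:ℂ) • v) := by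
        simpa using hd.hasFDerivAt
      exact h3.comp_hasDerivAt (0:ℂ) h2
    have h4 := h1.tendsto_slope_zero
    have h5 := (h.contα.continuousAt.tendsto.comp h4)
    refine ge_of_tendsto h5 ?_
    have hcont : Tendsto (fun t : ℂ => x + t • v) (nhds 0) (nhds x) := by
      have : Continuous (fun t : ℂ => x + t • v) := by fun_prop
      simpa using this.tendsto 0
    have h6 := (hcont.eventually (h.Wm_nhds hx))
    filter_upwards [h6.filter_mono nhdsWithin_le_nhds, self_mem_nhdsWithin] with t ht ht0
    have h7 := h.phi_anti ht hx
    have ht0' : t ≠ 0 := ht0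
    simp only [add_sub_cancel_left, map_smul_eq_mul] at h7
    simp only [Function.comp, zero_add, zero_smul, add_zero, map_smul_eq_mul, norm_inv]
    rw [le_inv_mul_iff₀ (norm_pos_iff.2 ht0')]
    linarith
  have hinj : Function.Injective L := by
    rw [injective_iff_map_eq_zero]
    intro v hv
    have h1 := hlow v
    rw [hv, map_zero] at h1
    have h2 : α v ≤ 0 := by
      by_contra hlt
      push Not at hlt
      have := mul_pos (pow_pos h.hκ m) hlt
      linarith
    exact norm_le_zero_iff.1 ((h.hα1 v).trans h2)
  let Le : N ≃ₗ[ℂ] N := LinearEquiv.ofInjectiveEndo (L : N →ₗ[ℂ] N) hinj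
  refine ⟨Le.toContinuousLinearEquiv, ?_⟩
  have : ((Le.toContinuousLinearEquiv : N ≃L[ℂ] N) : N →L[ℂ] N) = L := by
    ext v
    rfl
  rw [this]
  exact hd

lemma zeroWm (h : SoData N P α β R A W Q K r κ e μ) (m : ℕ) : (0 : N) ∈ h.Wm m := by
  intro j _
  simp [h.iter0, h.hr]

lemma far_point (h : SoData N P α β R A W Q K r κ e μ) (t : ℝ) (ht : 0 < t) (m : ℕ)
    (hclosed : ∀ (x : N) (z : ℂ), (∀ j ≤ m, R^[j] (x : B) ∈ W) → P (R^[m] x) = z • e → ‖z‖ < t →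
      x ∈ h.Wm m) :
    ∃ x : N, t * ‖e‖ / 2 ≤ ‖x‖ ∧ ∀ j ≤ m, R^[j] (x : B) ∈ W := by
  have hfd := h.fd
  have hprop : ProperSpace N := FiniteDimensional.proper_rclike ℂ N
  have he0 : 0 < ‖e‖ := by
    rw [norm_pos_iff]
    intro h0
    have := h.hαe
    rw [h0, map_zero] at this
    norm_num at this
  by_contra hcon
  push Not at hcon
  have hsmall : ∀ x ∈ h.Wm m, ‖x‖ < t * ‖e‖ / 2 := by
    intro x hx
    by_contra hlt
    push Not at hlt
    obtain ⟨j, hj, hj2⟩ := hcon x hlt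
    exact hj2 (h.Wm_W hx j hj)
  let Z : Set ℂ := {z | ∃ x ∈ h.Wm m, P (R^[m] x) = z • e}
  -- local structure
  have hloc : ∀ z ∈ Z, ∃ g : ℂ → N, DifferentiableAt ℂ g z ∧
      ∀ᶠ w in nhds z, g w ∈ h.Wm m ∧ P (R^[m] (g w)) = w • e := by
    rintro z ⟨x, hx, hxz⟩
    obtain ⟨L, hL⟩ := h.phi_deriv hx
    let g0 := hL.localInverse (fun y : N => P (R^[m] y)) L x
    have hg0 : HasStrictFDerivAt g0 (L.symm : N →L[ℂ] N) (P (R^[m] x)) := hL.to_localInverse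
    have hsm : Tendsto (fun w : ℂ => w • e) (nhds z) (nhds (P (R^[m] x))) := by
      rw [hxz]
      have : Continuous (fun w : ℂ => w • e) := by fun_prop
      exact this.tendsto z
    have hg0x : g0 (P (R^[m] x)) = x := hL.localInverse_apply_image
    refine ⟨fun w => g0 (w • e), ?_, ?_⟩
    · have hd : DifferentiableAt ℂ (fun w : ℂ => w • e) z := by fun_prop
      have hg1 : DifferentiableAt ℂ g0 (z • e) := by
        rw [← hxz]; exact hg0.hasFDerivAt.differentiableAt
      exact hg1.comp z hd
    · have e1 : ∀ᶠ y in nhds (P (R^[m] x)), P (R^[m] (g0 y)) = y := hL.eventually_right_inverse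
      have e2 : ∀ᶠ y in nhds (P (R^[m] x)), g0 y ∈ h.Wm m := by
        have : Tendsto g0 (nhds (P (R^[m] x))) (nhds x) := by
          have := hg0.hasFDerivAt.continuousAt.tendsto
          rwa [hg0x] at this
        exact this.eventually (h.Wm_nhds hx)
      filter_upwards [hsm.eventually e1, hsm.eventually e2] with w h1 h2
      exact ⟨h2, h1⟩
  have hZo : IsOpen Z := by
    rw [isOpen_iff_mem_nhds]
    intro z hz
    obtain ⟨g, _, hg⟩ := hloc z hz
    filter_upwards [hg] with w hw
    exact ⟨g w, hw⟩
  have h0Z : (0:ℂ) ∈ Z := ⟨0, h.zeroWm m, by simp [h.iter0]⟩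
  have hsub : ball (0:ℂ) t ⊆ Z := by
    apply (convex_ball (0:ℂ) t).isPreconnected.subset_of_closure_inter_subset hZo
      ⟨0, by simpa using ht, h0Z⟩
    rintro z ⟨hzc, hzb⟩
    obtain ⟨zs, hzs, hlim⟩ := mem_closure_iff_seq_limit.1 hzc
    choose xs hxs1 hxs2 using hzs
    obtain ⟨x, _, φ, hφ, hxlim⟩ := tendsto_subseq_of_bounded (x := xs)
      (isBounded_ball (x := (0:N)) (r := t * ‖e‖ / 2))
      (fun n => by simpa using hsmall _ (hxs1 n))
    have hl : Tendsto (fun n => ((xs (φ n) : N) : B)) atTop (nhds (x : B)) :=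
      (continuous_subtype_val.tendsto x).comp hxlim
    have h1 := h.lim_orbit m _ _ hl (fun j hj => Eventually.of_forall fun n =>
      h.Wm_W (hxs1 (φ n)) j hj)
    have h2 : P (R^[m] x) = z • e := by
      have h3 := (P.continuous.tendsto _).comp (h1 m le_rfl).1
      have h4 : Tendsto (fun n => zs (φ n) • e) atTop (nhds (z • e)) :=
        (hlim.comp hφ.tendsto_atTop).smul_const e
      refine tendsto_nhds_unique h3 (h4.congr fun n => ?_)
      exact (hxs2 (φ n)).symm
    exact ⟨x, hclosed x z (fun j hj => (h1 j hj).2) h2 (by simpa using hzb), h2⟩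
  choose! ψ hψ1 hψ2 using (fun (z : ℂ) (hz : z ∈ Z) => (hz : ∃ x ∈ h.Wm m, P (R^[m] x) = z • e))
  have hψd : ∀ z ∈ Z, DifferentiableAt ℂ ψ z := by
    intro z hz
    obtain ⟨g, hg, hg2⟩ := hloc z hz
    refine hg.congr_of_eventuallyEq ?_
    filter_upwards [hg2, hZo.mem_nhds hz] with w hw hwZ
    exact h.phi_inj (hψ1 w hwZ) hw.1 (by rw [hψ2 w hwZ, hw.2])
  have hψ0 : ψ 0 = 0 := h.phi_inj (hψ1 0 h0Z) (h.zeroWm m) (by rw [hψ2 0 h0Z]; simp [h.iter0])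
  -- derivative at zero
  obtain ⟨L, hL⟩ := h.phi_deriv (h.zeroWm m)
  have hLe : L e = μ ^ m • e := by
    have hA' : HasFDerivAt (fun y : N => P (R^[m] y)) ((P.comp (A ^ m)).comp N.subtypeL) 0 := by
      have h1 : HasFDerivAt R^[m] (A ^ m) ((0 : N) : B) := by
        have := h.hA.iterate h.hR0 m
        simpa using this
      exact P.hasFDerivAt.comp (0:N) (h1.comp (0:N) N.subtypeL.hasFDerivAt)
    have h2 := hL.hasFDerivAt.unique hA'
    have h3 : ∀ k : ℕ, (A ^ k) (e : B) = μ ^ k • (e : B) := by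
      intro k
      induction k with
      | zero => simp
      | succ k ih => rw [pow_succ', mul_apply_eq_comp, ih, map_smul, h.he, smul_smul, pow_succ]
    have h4 : L e = P ((A ^ m) e) := congrArg (fun g : N →L[ℂ] N => g e) h2
    rw [h4, h3, map_smul, h.hP]
  have hLd : L (deriv ψ 0) = e := by
    have h1 : HasDerivAt ψ (deriv ψ 0) 0 := (hψd 0 h0Z).hasDerivAt
    have hL0 : HasFDerivAt (fun y : N => P (R^[m] y)) (L : N →L[ℂ] N) (ψ 0) := by
      rw [hψ0]; exact hL.hasFDerivAt
    have h2 := hL0.comp_hasDerivAt (0:ℂ) h1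
    have h3 : HasDerivAt (fun z : ℂ => z • e) e 0 := by
      simpa using (hasDerivAt_id (0:ℂ)).smul_const e
    have h4 : (fun y : N => P (R^[m] y)) ∘ ψ =ᶠ[nhds 0] fun z : ℂ => z • e := by
      filter_upwards [hZo.mem_nhds h0Z] with z hz
      exact hψ2 z hz
    exact (h2.congr_of_eventuallyEq h4.symm).unique h3
  have hde : μ ^ m • deriv ψ 0 = e := by
    apply L.injective
    rw [map_smul, hLd, hLe]
  have hnd : ‖deriv ψ 0‖ = ‖e‖ := by
    rw [← hde, norm_smul, norm_pow, h.hμ, one_pow, one_mul]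
  have hS := Complex.norm_deriv_le_div_of_mapsTo_ball (f := ψ) (c := 0) (R₁ := t)
    (R₂ := t * ‖e‖ / 2) (fun z hz => (hψd z (hsub hz)).differentiableWithinAt) (by
      intro z hz
      rw [hψ0]
      exact ball_subset_closedBall (by simpa using hsmall _ (hψ1 z (hsub hz)))) ht
  rw [hnd, le_div_iff₀ ht] at hS
  nlinarith

theorem main (h : SoData N P α β R A W Q K r κ e μ) :
    ∃ p, p ≠ 0 ∧ β p ≤ α (P p) ∧ ∀ j, R^[j] p ∈ W := by
  have hfd := h.fd
  have hprop : ProperSpace N := FiniteDimensional.proper_rclike ℂ N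
  have he0 : 0 < ‖e‖ := by
    rw [norm_pos_iff]
    intro h0
    have := h.hαe
    rw [h0, map_zero] at this
    norm_num at this
  let Q' : Set B := Q ∪ (Subtype.val '' closedBall (0:N) r)
  have hQ' : IsCompact Q' := h.hQ.union ((isCompact_closedBall (0:N) r).image continuous_subtype_val)
  have hxQ : ∀ x : N, (x : B) ∈ W → (x : B) ∈ Q' := by
    intro x hx
    right
    refine ⟨x, ?_, rfl⟩
    have := ((h.hW _).1 hx).1
    rw [h.hP] at this
    simpa using (h.hα1 x).trans this
  by_cases hcase : ∀ n : ℕ, ∃ q ∈ Q', β q ≤ α (P q) ∧ r ≤ α (P q) ∧ ∀ j ≤ n, R^[j] q ∈ W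
  · exact h.lim_point r h.hr Q' hQ' hcase
  push Not at hcase
  obtain ⟨n0, hn0⟩ := hcase
  have ht : 0 < κ ^ n0 * r := mul_pos (pow_pos h.hκ _) h.hr
  refine h.lim_point (κ ^ n0 * r * ‖e‖ / 2) (by positivity) Q' hQ' (fun m => ?_)
  obtain ⟨x, hx1, hx2⟩ := h.far_point (κ ^ n0 * r) ht m (by
    intro x z hxW hxz hz
    by_contra hxm
    simp only [Wm, Set.mem_setOf_eq, not_forall] at hxm
    obtain ⟨j, hj, hj2⟩ := hxm
    have hc0 : β (x : B) ≤ α (P x) := by rw [h.hβN]; exact apply_nonneg _ _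
    have hcj := (h.iter_cone0 j x (fun i hi => hxW i (by omega)) hc0).1
    have hrj : r ≤ α (P (R^[j] x)) := by
      by_contra hlt
      push Not at hlt
      exact hj2 ⟨hlt, hcj.trans_lt hlt⟩
    have hq : R^[j] (x : B) ∈ Q' := by
      cases j with
      | zero => exact hxQ x (hxW 0 hj)
      | succ k =>
        left
        rw [Function.iterate_succ_apply']
        exact h.hRQ _ (hxW k (by omega))
    obtain ⟨i, hi, hi2⟩ := hn0 _ hq hcj hrj
    have him : m - j < n0 := by
      by_contra hge
      push Not at hge
      apply hi2
      rw [← Function.iterate_add_apply]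
      exact hxW _ (by omega)
    have hfin := (h.iter_cone0 (m - j) (R^[j] x) (fun i hi => by
      rw [← Function.iterate_add_apply]
      exact hxW _ (by omega)) hcj).2
    rw [← Function.iterate_add_apply, Nat.sub_add_cancel hj, hxz, map_smul_eq_mul, h.hαe,
      mul_one] at hfin
    have h1 : κ ^ n0 * r ≤ κ ^ (m - j) * α (P (R^[j] x)) :=
      mul_le_mul (pow_le_pow_of_le_one h.hκ.le h.hκ1 him.le) hrj h.hr.le (pow_nonneg h.hκ.le _)
    linarith)
  refine ⟨x, hxQ x (hx2 0 (Nat.zero_le _)), ?_, ?_, hx2⟩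
  · rw [h.hβN]; exact apply_nonneg _ _
  · rw [h.hP]
    exact hx1.trans (h.hα1 x)

end SoData

lemma so_log_rate (u : ℕ → ℝ) (hu : ∀ m, 0 < u m) (M : ℝ) (hM : ∀ m, u m ≤ M)
    (hlow : ∀ δ : ℝ, 0 < δ → ∃ c > 0, ∀ m : ℕ, c * (((1 + δ) ^ 2)⁻¹) ^ m ≤ u m) :
    Tendsto (fun m : ℕ => (1 / (m : ℝ)) * Real.log (u m)) atTop (nhds 0) := by
  rw [Metric.tendsto_atTop']
  intro ε hε
  obtain ⟨c, hc, hcu⟩ := hlow (ε / 4) (by positivity)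
  have h1 : Tendsto (fun m : ℕ => |Real.log M| / (m:ℝ)) atTop (nhds 0) :=
    tendsto_const_div_atTop_nhds_zero_nat _
  have h2 : Tendsto (fun m : ℕ => |Real.log c| / (m:ℝ)) atTop (nhds 0) :=
    tendsto_const_div_atTop_nhds_zero_nat _
  have h3 := (h1.eventually_lt_const hε).and (h2.eventually_lt_const (show 0 < ε / 2 by positivity))
  obtain ⟨n, hn⟩ := eventually_atTop.1 (h3.and (eventually_ge_atTop 1))
  refine ⟨n, fun m hm => ?_⟩
  obtain ⟨⟨h4, h5⟩, h6⟩ := hn m hm.le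
  have hm0 : (0:ℝ) < m := by exact_mod_cast h6
  rw [Real.dist_eq, sub_zero, one_div, inv_mul_eq_div, abs_lt]
  constructor
  · have h7 : Real.log c - m * (ε / 2) ≤ Real.log (u m) := by
      have h8 := Real.log_le_log (by positivity) (hcu m)
      rw [Real.log_mul hc.ne' (by positivity), Real.log_pow, Real.log_inv, Real.log_pow] at h8
      have h9 : Real.log (1 + ε / 4) ≤ ε / 4 := by
        have := Real.log_le_sub_one_of_pos (show 0 < 1 + ε / 4 by positivity)
        linarith
      push_cast at h8
      have : (m:ℝ) * Real.log (1 + ε / 4) ≤ m * (ε / 4) := mul_le_mul_of_nonneg_left h9 hm0.le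
      linarith
    rw [lt_div_iff₀ hm0]
    rw [div_lt_iff₀ hm0] at h5
    have := neg_abs_le (Real.log c)
    linarith
  · rw [div_lt_iff₀ hm0] at h4 ⊢
    have := Real.log_le_log (hu m) (hM m)
    have := le_abs_self (Real.log M)
    linarith

namespace SoData

variable {B : Type*} [NormedAddCommGroup B] [NormedSpace ℂ B]
    {N : Submodule ℂ B} {P : B →L[ℂ] N} {α : Seminorm ℂ N} {β : Seminorm ℂ B}
    {R : B → B} {A : B →L[ℂ] B} {W Q : Set B} {K r κ : ℝ} {e : N} {μ : ℂ}

lemma rate (h : SoData N P α β R A W Q K r κ e μ) (f : N →L[ℂ] N)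
    (hf : ∀ v, P (A v) = f (P v))
    (hfe : ∀ (μ : ℂ) (v : N), v ≠ 0 → f v = μ • v → ‖μ‖ = 1)
    (p : B) (hp0 : p ≠ 0) (hc : β p ≤ α (P p)) (hpW : ∀ j, R^[j] p ∈ W) :
    (∀ j, R^[j] p ≠ 0) ∧
      Tendsto (fun m : ℕ => (1 / (m : ℝ)) * Real.log ‖R^[m] p‖) atTop (nhds 0) := by
  have hfd := h.fd
  have hK0 : 0 < K := by
    have h1 := h.hα2 e
    rw [h.hαe] at h1
    by_contra hlt
    push Not at hlt
    have := mul_nonpos_of_nonpos_of_nonneg hlt (norm_nonneg e)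
    linarith
  have hnt : Nontrivial N := by
    refine ⟨e, 0, ?_⟩
    intro h0
    have := h.hαe
    rw [h0, map_zero] at this
    norm_num at this
  have hcj : ∀ j, β (R^[j] p) ≤ α (P (R^[j] p)) := fun j =>
    (h.iter_cone0 j p (fun i _ => hpW i) hc).1
  have hnormj : ∀ j, ‖R^[j] p‖ ≤ K * α (P (R^[j] p)) := fun j => by
    have := h.hnorm (R^[j] p)
    rwa [max_eq_left (hcj j)] at this
  have hα0 : 0 < α (P p) := by
    by_contra hlt
    push Not at hlt
    have := hnormj 0
    have h2 := mul_nonpos_of_nonneg_of_nonpos hK0.le hlt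
    exact hp0 (norm_le_zero_iff.1 (this.trans h2))
  have hαj : ∀ j, 0 < α (P (R^[j] p)) := fun j =>
    lt_of_lt_of_le (mul_pos (pow_pos h.hκ j) hα0) (h.iter_cone0 j p (fun i _ => hpW i) hc).2
  have hne : ∀ j, R^[j] p ≠ 0 := by
    intro j h0
    have := hαj j
    rw [h0] at this
    simp at this
  refine ⟨hne, so_log_rate _ (fun m => norm_pos_iff.2 (hne m)) (K * r) (fun m => ?_) ?_⟩
  · exact (hnormj m).trans (mul_le_mul_of_nonneg_left ((h.hW _).1 (hpW m)).1 hK0.le)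
  intro δ hδ
  obtain ⟨γ, L, hL, hγ1, hγ2, hγ3⟩ := so_adaptN f hfe (1 + δ) (by linarith)
  let C : ℝ := L * (‖P‖ + 1) * (K * K)
  have hC : 0 < C := by positivity
  let ε : ℝ := δ / (1 + δ) ^ 2 / C
  have hε : 0 < ε := by positivity
  have hlo := (hasFDerivAt_iff_isLittleO_nhds_zero.1 h.hA).def hε
  simp only [zero_add, h.hR0, sub_zero] at hlo
  obtain ⟨s, hs, hsR⟩ := Metric.eventually_nhds_iff.1 hlo
  have hγP : ∀ v : B, γ (P v) ≤ L * (‖P‖ + 1) * ‖v‖ := by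
    intro v
    refine (hγ2 _).trans ?_
    rw [mul_assoc]
    refine mul_le_mul_of_nonneg_left ((P.le_opNorm v).trans ?_) hL.le
    exact mul_le_mul_of_nonneg_right (by linarith) (norm_nonneg v)
  let c1 : ℝ := κ * (s / K) / K
  have hc1 : 0 < c1 := by have := h.hκ; positivity
  have hγ0 : 0 < γ (P p) := by
    refine lt_of_lt_of_le (norm_pos_iff.2 ?_) (hγ1 _)
    intro h0
    rw [h0, map_zero] at hα0
    exact lt_irrefl _ hα0
  have hd1 : ((1 + δ) ^ 2)⁻¹ ≤ 1 := by
    apply inv_le_one_of_one_le₀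
    nlinarith
  have hd0 : 0 < ((1 + δ) ^ 2)⁻¹ := by positivity
  have key : ∀ m : ℕ, min (γ (P p)) c1 * (((1 + δ) ^ 2)⁻¹) ^ m ≤ γ (P (R^[m] p)) := by
    intro m
    induction m with
    | zero => simp
    | succ m ih =>
      rw [Function.iterate_succ_apply']
      by_cases hsm : ‖R^[m] p‖ < s
      · have h1 := hsR (y := R^[m] p) (by simpa using hsm)
        have h2 : γ (P (R (R^[m] p) - A (R^[m] p))) ≤ δ / (1 + δ) ^ 2 * γ (P (R^[m] p)) := by
          have h3 := hγP (R (R^[m] p) - A (R^[m] p))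
          have h4 : ‖R^[m] p‖ ≤ K * K * γ (P (R^[m] p)) := by
            refine (hnormj m).trans ?_
            rw [mul_assoc]
            refine mul_le_mul_of_nonneg_left ((h.hα2 _).trans ?_) hK0.le
            exact mul_le_mul_of_nonneg_left (hγ1 _) hK0.le
          calc _ ≤ L * (‖P‖ + 1) * ‖R (R^[m] p) - A (R^[m] p)‖ := h3
            _ ≤ L * (‖P‖ + 1) * (ε * (K * K * γ (P (R^[m] p)))) := by
                apply mul_le_mul_of_nonneg_left _ (by positivity)
                exact h1.trans (mul_le_mul_of_nonneg_left h4 hε.le)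
            _ = ε * C * γ (P (R^[m] p)) := by simp only [C]; ring
            _ = _ := by simp only [ε]; rw [div_mul_cancel₀ _ hC.ne']
        have h5 := hγ3 (P (R^[m] p))
        have h6 : γ (f (P (R^[m] p))) ≤ γ (P (R (R^[m] p))) +
            γ (P (R (R^[m] p) - A (R^[m] p))) := by
          have : f (P (R^[m] p)) = P (R (R^[m] p)) - P (R (R^[m] p) - A (R^[m] p)) := by
            rw [← hf, map_sub]; abel
          rw [this]
          exact map_sub_le_add γ _ _
        have h7 : ((1 + δ) ^ 2)⁻¹ * γ (P (R^[m] p)) ≤ γ (P (R (R^[m] p))) := by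
          have h8 : (1 + δ)⁻¹ * γ (P (R^[m] p)) ≤ γ (f (P (R^[m] p))) := by
            rw [inv_mul_le_iff₀ (by positivity)]; exact h5
          have h9 : (1 + δ)⁻¹ = ((1 + δ) ^ 2)⁻¹ + δ / (1 + δ) ^ 2 := by
            field_simp
          rw [h9, add_mul] at h8
          linarith
        rw [pow_succ]
        calc _ = ((1 + δ) ^ 2)⁻¹ * (min (γ (P p)) c1 * ((1 + δ) ^ 2)⁻¹ ^ m) := by ring
          _ ≤ ((1 + δ) ^ 2)⁻¹ * γ (P (R^[m] p)) := mul_le_mul_of_nonneg_left ih hd0.le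
          _ ≤ _ := h7
      · push Not at hsm
        have h1 : s / K ≤ α (P (R^[m] p)) := by
          rw [div_le_iff₀' hK0]; exact hsm.trans (hnormj m)
        have h2 := (h.iter_cone0 1 (R^[m] p) (fun i hi => by
          rw [← Function.iterate_add_apply]; exact hpW _) (hcj m)).2
        simp only [pow_one, Function.iterate_one] at h2
        have h3 : κ * (s / K) ≤ K * ‖P (R (R^[m] p))‖ :=
          (mul_le_mul_of_nonneg_left h1 h.hκ.le).trans (h2.trans (h.hα2 _))
        have h4 : c1 ≤ γ (P (R (R^[m] p))) := by
          refine le_trans ?_ (hγ1 _)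
          rw [div_le_iff₀' hK0]; exact h3
        refine le_trans ?_ h4
        refine le_trans (mul_le_of_le_one_right (le_min hγ0.le hc1.le) ?_) (min_le_right _ _)
        exact pow_le_one₀ hd0.le hd1
  refine ⟨min (γ (P p)) c1 / (L * (‖P‖ + 1)), ?_, fun m => ?_⟩
  · have := lt_min hγ0 hc1
    positivity
  · rw [div_mul_eq_mul_div, div_le_iff₀' (by positivity)]
    exact (key m).trans (hγP _)

end SoData

lemma so_linear {B : Type*} [NormedAddCommGroup B] [NormedSpace ℂ B] [CompleteSpace B]
    (A : B →L[ℂ] B) (hA : IsCompactOperator A)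
    (h1 : spectrum ℂ A ⊆ Metric.closedBall (0 : ℂ) 1)
    (h2 : (spectrum ℂ A ∩ Metric.sphere (0 : ℂ) 1).Nonempty) :
    ∃ (N : Submodule ℂ B) (P : B →L[ℂ] N) (α : Seminorm ℂ N) (β : Seminorm ℂ B) (K κ η : ℝ)
      (e : N) (μ : ℂ) (f : N →L[ℂ] N),
      FiniteDimensional ℂ N ∧ (∀ n : N, P n = n) ∧ (∀ x, ‖x‖ ≤ α x) ∧ (∀ x, α x ≤ K * ‖x‖) ∧
      (∀ x, β x ≤ K * ‖x‖) ∧ (∀ x : N, β x = 0) ∧ (∀ v, ‖v‖ ≤ K * max (α (P v)) (β v)) ∧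
      0 < K ∧ 0 < η ∧ 0 < κ ∧ κ ≤ 1 ∧ (∀ v, β (A v) ≤ (κ - η) * β v) ∧ 0 ≤ κ - η ∧
      (∀ v, (κ + η) * α (P v) ≤ α (P (A v))) ∧ (∀ v, α (P v) ≤ K * ‖v‖) ∧
      A e = μ • (e : B) ∧ ‖μ‖ = 1 ∧ α e = 1 ∧ (∀ v, P (A v) = f (P v)) ∧
      (∀ (μ : ℂ) (v : N), v ≠ 0 → f v = μ • v → ‖μ‖ = 1) := by
  obtain ⟨N, ⟨hfd, hinv, hN⟩, P, hP, hPA, hPn⟩ := so_split A hA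
  obtain ⟨μ, hμs, hμ1⟩ := h2
  have hμ : ‖μ‖ = 1 := by simpa using hμ1
  have hμ0 : μ ≠ 0 := by rintro rfl; simp at hμ
  obtain ⟨v0, hv0⟩ := ((hA.hasEigenvalue_iff_mem_spectrum hμ0).2 hμs).exists_hasEigenvector
  have hv0A : A v0 = μ • v0 := hv0.apply_eq_smul
  have hv0n : v0 ≠ 0 := hv0.2
  have he0 : P v0 ≠ 0 := fun h => hPn v0 h hv0n μ hv0A hμ
  set e0 : N := P v0 with he0def
  have hAe0 : A e0 = μ • (e0 : B) := by
    rw [← hPA, hv0A]; simp [he0def]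
  haveI : Nontrivial N := ⟨⟨e0, 0, he0⟩⟩
  haveI : Nontrivial B := ⟨⟨v0, 0, hv0n⟩⟩
  let f : N →L[ℂ] N := P.comp (A.comp N.subtypeL)
  have hfN : ∀ n : N, ((f n : N) : B) = A n := by
    intro n
    have : (f n : B) = (P (A n) : B) := rfl
    rw [this, hPA, hP]
  have hf : ∀ v, P (A v) = f (P v) := by
    intro v
    apply Subtype.ext
    rw [hfN, hPA]
  have hfe : ∀ (μ : ℂ) (v : N), v ≠ 0 → f v = μ • v → ‖μ‖ = 1 := by
    intro μ v hv h
    refine hN v v.2 (by simpa using hv) μ ?_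
    rw [← hfN, h]; rfl
  -- complementary part
  let P' : B →L[ℂ] B := N.subtypeL.comp P
  let C : B →L[ℂ] B := 1 - P'
  have hC : ∀ v, C v = v - (P v : B) := fun v => rfl
  have hPC : ∀ v, P (C v) = 0 := by
    intro v; rw [hC, map_sub, hP, sub_self]
  have hCA : ∀ v, C (A v) = A (C v) := by
    intro v; rw [hC, hC, map_sub, hPA]
  have hCC : ∀ v, C (C v) = C v := by
    intro v; rw [hC (C v), hPC]; simp
  let D : B →L[ℂ] B := A.comp C
  have hD : ∀ v, D v = A (C v) := fun v => rfl
  have hDc : IsCompactOperator D := hA.comp_clm C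
  have hDs : ∀ z ∈ spectrum ℂ D, ‖z‖ < 1 := by
    intro z hz
    by_cases hz0 : z = 0
    · simp [hz0]
    obtain ⟨v, hv⟩ := ((hDc.hasEigenvalue_iff_mem_spectrum hz0).2 hz).exists_hasEigenvector
    have hvD : D v = z • v := hv.apply_eq_smul
    have hvn : v ≠ 0 := hv.2
    have hPv : P v = 0 := by
      have h3 : P (D v) = 0 := by rw [hD, ← hCA, hPC]
      rw [hvD, map_smul] at h3
      exact (smul_eq_zero.1 h3).resolve_left hz0
    have hAv : A v = z • v := by
      have : C v = v := by rw [hC, hPv]; simp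
      rw [← hvD, hD, this]
    have hzs : z ∈ spectrum ℂ A := by
      rw [← hA.hasEigenvalue_iff_mem_spectrum hz0]
      exact Module.End.hasEigenvalue_of_hasEigenvector (x := v)
        ⟨Module.End.mem_eigenspace_iff.2 hAv, hvn⟩
    have hz1 : ‖z‖ ≤ 1 := by simpa using h1 hzs
    exact lt_of_le_of_ne hz1 (hPn v hPv hvn z hAv)
  obtain ⟨θ, hθ0, hθ1, hθ⟩ : ∃ θ : ℝ, 0 < θ ∧ θ < 1 ∧ ∀ z ∈ spectrum ℂ D, ‖z‖ < θ := by
    obtain ⟨z0, hz0, hm⟩ := (spectrum.isCompact (𝕜 := ℂ) D).exists_isMaxOn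
      (spectrum.nonempty D) (continuous_norm.continuousOn)
    have h3 := hDs z0 hz0
    refine ⟨(‖z0‖ + 1) / 2, by positivity, by linarith, fun z hz => ?_⟩
    have : ‖z‖ ≤ ‖z0‖ := hm hz
    linarith
  obtain ⟨β0, Kβ, hKβ, hβ1, hβ2, hβ3⟩ := so_adapt D θ hθ0 hθ
  have hb : 1 < 2 / (1 + θ) := by rw [lt_div_iff₀ (by linarith)]; linarith
  obtain ⟨α, Kα, hKα, hα1, hα2, hα3⟩ := so_adaptN f hfe (2 / (1 + θ)) hb
  let β : Seminorm ℂ B := β0.comp (C : B →ₗ[ℂ] B)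
  have hβd : ∀ v, β v = β0 (C v) := fun v => rfl
  have hαe0 : 0 < α e0 := lt_of_lt_of_le (norm_pos_iff.2 he0) (hα1 e0)
  set K : ℝ := Kα * (1 + ‖P‖) + Kβ * ‖C‖ + 2 with hK
  have hK2 : 2 ≤ K := by
    have : 0 ≤ Kα * (1 + ‖P‖) + Kβ * ‖C‖ := by positivity
    linarith
  have hKKα : Kα ≤ K := by
    have : 0 ≤ Kα * ‖P‖ + Kβ * ‖C‖ := by positivity
    rw [hK]; linarith
  have hKKP : Kα * ‖P‖ ≤ K := by
    have : 0 ≤ Kβ * ‖C‖ := by positivity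
    rw [hK]; linarith
  have hKKβ : Kβ * ‖C‖ ≤ K := by
    have : 0 ≤ Kα * (1 + ‖P‖) := by positivity
    rw [hK]; linarith
  refine ⟨N, P, α, β, K, (1 + 3 * θ) / 4, (1 - θ) / 4, (((α e0)⁻¹ : ℝ) : ℂ) • e0, μ, f, hfd, hP,
    hα1, ?_, ?_, ?_, ?_, by linarith, by linarith, by linarith, by linarith, ?_, by linarith,
    ?_, ?_, ?_, hμ, ?_, hf, hfe⟩
  · intro x
    exact (hα2 x).trans (by gcongr)
  · intro x
    rw [hβd]
    calc β0 (C x) ≤ Kβ * ‖C x‖ := hβ2 _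
      _ ≤ Kβ * (‖C‖ * ‖x‖) := by gcongr; exact C.le_opNorm x
      _ = (Kβ * ‖C‖) * ‖x‖ := by ring
      _ ≤ K * ‖x‖ := by gcongr
  · intro x
    rw [hβd, hC, hP]; simp
  · intro v
    have e1 : v = (P v : B) + C v := by rw [hC]; abel
    have e2 : ‖v‖ ≤ ‖(P v : B)‖ + ‖C v‖ := by
      conv_lhs => rw [e1]
      exact norm_add_le _ _
    have e3 : ‖(P v : B)‖ ≤ α (P v) := hα1 (P v)
    have e4 : ‖C v‖ ≤ β v := by rw [hβd]; exact hβ1 _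
    have e5 := le_max_left (α (P v)) (β v)
    have e6 := le_max_right (α (P v)) (β v)
    have e7 : 0 ≤ max (α (P v)) (β v) := (apply_nonneg α (P v)).trans e5
    nlinarith
  · intro v
    have : (1 + 3 * θ) / 4 - (1 - θ) / 4 = θ := by ring
    rw [this, hβd, hβd]
    have h3 := hβ3 (C v)
    rwa [hD, hCC, ← hCA] at h3
  · intro v
    have : (1 + 3 * θ) / 4 + (1 - θ) / 4 = (1 + θ) / 2 := by ring
    rw [this, hf]
    have h3 := hα3 (P v)
    have h4 : (1 + θ) / 2 * α (P v) ≤ (1 + θ) / 2 * (2 / (1 + θ) * α (f (P v))) := by gcongr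
    have h5 : (1 + θ) / 2 * (2 / (1 + θ) * α (f (P v))) = α (f (P v)) := by
      have : 1 + θ ≠ 0 := by linarith
      field_simp
    linarith
  · intro v
    calc α (P v) ≤ Kα * ‖P v‖ := hα2 _
      _ ≤ Kα * (‖P‖ * ‖v‖) := by gcongr; exact P.le_opNorm v
      _ = (Kα * ‖P‖) * ‖v‖ := by ring
      _ ≤ K * ‖v‖ := by gcongr
  · rw [Submodule.coe_smul, map_smul, hAe0, smul_comm]
  · rw [map_smul_eq_mul, Complex.norm_real, Real.norm_of_nonneg (by positivity)]
    field_simp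


/-- **Small Orbits Theorem.** Let `B ⊇ B'` be complex Banach spaces with a compact injective
continuous linear embedding `i : B' → B`.  Let `T : (U, 0) → (B', 0)` be complex analytic on a
neighborhood `U` of `0` in `B`, and `R = i ∘ T`.  If the spectrum of `DR(0)` lies in the closed
unit disk and meets the unit circle, then `R` has slow small orbits: every neighborhood `V ⊆ U`
of `0` contains a point `f` whose forward orbit stays in `V`, never hits `0`, and satisfies
`(1/m) log ‖R^m f‖ → 0`. -/
theorem small_orbits_theorem
    {B B' : Type*} [NormedAddCommGroup B] [NormedSpace ℂ B] [CompleteSpace B]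
    [NormedAddCommGroup B'] [NormedSpace ℂ B'] [CompleteSpace B']
    (i : B' →L[ℂ] B) (hi_inj : Function.Injective i)
    (hi_cpt : IsCompactOperator (⇑i))
    (U : Set B) (hU : IsOpen U) (h0U : (0 : B) ∈ U)
    (T : B → B') (hT : AnalyticOnNhd ℂ T U) (hT0 : T 0 = 0)
    (R : B → B) (hR : ∀ x, R x = i (T x))
    (hspec₁ : spectrum ℂ (fderiv ℂ R 0) ⊆ Metric.closedBall (0 : ℂ) 1)
    (hspec₂ : (spectrum ℂ (fderiv ℂ R 0) ∩ Metric.sphere (0 : ℂ) 1).Nonempty) :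
    ∀ V ∈ nhds (0 : B), V ⊆ U →
      ∃ f ∈ V, (∀ m : ℕ, R^[m] f ∈ V ∧ R^[m] f ≠ 0) ∧
        Tendsto (fun m : ℕ => (1 / (m : ℝ)) * Real.log ‖R^[m] f‖) atTop (nhds 0) := by
  intro V hV hVU
  have hRe : R = fun x => i (T x) := funext hR
  have hRan : ∀ x ∈ U, AnalyticAt ℂ R x := by
    intro x hx
    rw [hRe]
    exact (i.analyticAt (T x)).comp (hT x hx)
  have hR0 : R 0 = 0 := by rw [hR, hT0, map_zero]
  have hstrict : HasStrictFDerivAt R (fderiv ℂ R 0) 0 := (hRan 0 h0U).hasStrictFDerivAt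
  have hAeq : fderiv ℂ R 0 = i.comp (fderiv ℂ T 0) := by
    have h3 : HasFDerivAt R (i.comp (fderiv ℂ T 0)) 0 := by
      rw [hRe]
      exact i.hasFDerivAt.comp 0 (hT 0 h0U).differentiableAt.hasFDerivAt
    exact h3.fderiv
  have hA : IsCompactOperator (fderiv ℂ R 0) := by
    rw [hAeq]; exact hi_cpt.comp_clm _
  generalize fderiv ℂ R 0 = A at hspec₁ hspec₂ hstrict hA
  obtain ⟨N, P, α, β, K, κ, η, e, μ, f, hfd, hP, hα1, hα2, hβ, hβN, hnorm, hK, hη, hκ, hκ1, hβA,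
    hκη, hαA, hαP, he, hμ, hαe, hf, hfe⟩ := so_linear A hA hspec₁ hspec₂
  have hc : 0 < η / (K * K) := by positivity
  obtain ⟨s, hs, hap⟩ := hstrict.approximates_deriv_on_nhds (c := ⟨η / (K * K), hc.le⟩)
    (Or.inr (by exact_mod_cast hc))
  have hT1 : {x | ‖T x‖ ≤ 1} ∈ nhds (0 : B) := by
    have hcont : ContinuousAt (fun x => ‖T x‖) 0 := (hT 0 h0U).continuousAt.norm
    have : (fun x => ‖T x‖) 0 < 1 := by simp [hT0]
    filter_upwards [hcont.eventually_lt continuousAt_const this] with x hx using le_of_lt hx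
  obtain ⟨ρ, hρ, hball⟩ := Metric.mem_nhds_iff.1 (inter_mem (inter_mem hV hs) hT1)
  set r : ℝ := ρ / (2 * K) with hr
  have hr0 : 0 < r := by positivity
  let W : Set B := {p | α (P p) ≤ r ∧ β p ≤ r}
  have hWb : ∀ p ∈ W, p ∈ (V ∩ s) ∩ {x | ‖T x‖ ≤ 1} := by
    intro p hp
    apply hball
    rw [mem_ball_zero_iff]
    calc ‖p‖ ≤ K * max (α (P p)) (β p) := hnorm p
      _ ≤ K * r := by gcongr; exact max_le hp.1 hp.2
      _ = ρ / 2 := by rw [hr]; field_simp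
      _ < ρ := by linarith
  have hdata : SoData N P α β R A W (closure (i '' Metric.closedBall 0 1)) K r κ e μ := by
    refine ⟨hfd, hP, hα1, hα2, hβ, hβN, hnorm, hr0, hκ, hκ1, fun p => Iff.rfl, ?_, hR0, ?_, ?_, ?_,
      hstrict.hasFDerivAt, he, hμ, hαe⟩
    · intro p hp q hq hpq
      have hw : ‖R p - R q - A (p - q)‖ ≤ η / (K * K) * ‖p - q‖ :=
        hap p (hWb p hp).1.2 q (hWb q hq).1.2
      set d := p - q with hd
      set w := R p - R q - A d with hwd
      have hRw : R p - R q = A d + w := by rw [hwd]; abel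
      have hdn : ‖d‖ ≤ K * α (P d) := by
        have := hnorm d
        rwa [max_eq_left hpq] at this
      have hKw : K * ‖w‖ ≤ η * α (P d) := by
        calc K * ‖w‖ ≤ K * (η / (K * K) * (K * α (P d))) := by
              gcongr
              exact hw.trans (by gcongr)
          _ = η * α (P d) := by field_simp
      have hup : β (R p - R q) ≤ κ * α (P d) := by
        rw [hRw]
        have t1 := map_add_le_add β (A d) w
        have t2 := hβA d
        have t3 := hβ w
        have t4 : (κ - η) * β d ≤ (κ - η) * α (P d) := by gcongr
        linarith
      have hlow : κ * α (P d) ≤ α (P (R p - R q)) := by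
        have t1 : α (P (A d)) ≤ α (P (R p - R q)) + α (P w) := by
          have : P (A d) = P (R p - R q) - P w := by rw [hRw, map_add]; abel
          rw [this]
          exact map_sub_le_add α _ _
        have t2 := hαA d
        have t3 := hαP w
        linarith
      exact ⟨hup.trans hlow, hlow⟩
    · intro p hp
      exact hRan p (hVU (hWb p hp).1.1)
    · exact IsCompactOperator.isCompact_closure_image_closedBall (f := (i : B' →ₗ[ℂ] B)) hi_cpt 1
    · intro p hp
      apply subset_closure
      refine ⟨T p, ?_, (hR p).symm⟩
      rw [mem_closedBall_zero_iff]
      exact (hWb p hp).2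
  obtain ⟨p, hp0, hpc, hpW⟩ := hdata.main
  obtain ⟨hne, hlim⟩ := hdata.rate f hf hfe p hp0 hpc hpW
  exact ⟨p, (hWb _ (hpW 0)).1.1, fun m => ⟨(hWb _ (hpW m)).1.1, hne m⟩, hlim⟩
end

section
/- Growth of a continuous cocycle over a system with the specification property (scalar form of the key expansion lemma): let (X, d) be a nonempty compact metric space and L : X → X a continuous map satisfying the specification property. Let a : X → ℝ be continuous, write S_n a(x) = Σ_{k=0}^{n−1} a(L^k x) for the Birkhoff sums, and let γ = inf{ S_m a(y)/m : m ≥ 1, y ∈ X, L^m y = y } (the infimum over all periodic orbits of the orbit averages of a; the set of periodic points is nonempty by specification). Then for every real λ < γ there exists a constant c ∈ ℝ such that S_n a(x) ≥ c + n·λ for every x ∈ X and every n ≥ 0. -/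
open Filter

/-- A continuous map `L` of a compact metric space satisfies the **specification property** if
for every `ε > 0` there is `l ∈ ℕ` such that every orbit segment of length `n ≥ 1` is
`ε`-shadowed by a periodic orbit of period `m` with `1 ≤ m ≤ n + l`. -/
def SpecificationProperty {X : Type*} [MetricSpace X] (L : X → X) : Prop :=
  ∀ ε : ℝ, 0 < ε → ∃ l : ℕ, ∀ n : ℕ, 1 ≤ n → ∀ x : X,
    ∃ m : ℕ, 1 ≤ m ∧ m ≤ n + l ∧ ∃ y : X, L^[m] y = y ∧
      ∀ k : ℕ, k < n → dist (L^[k] x) (L^[k] y) ≤ ε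

theorem aux_periodic {X : Type*} (L : X → X) (a : X → ℝ) (m : ℕ) (y : X) (hy : L^[m] y = y)
    (r q : ℕ) : ∑ k ∈ Finset.range (q * m + r), a (L^[k] y) =
      q * ∑ k ∈ Finset.range m, a (L^[k] y) + ∑ k ∈ Finset.range r, a (L^[k] y) := by
  induction q with
  | zero => simp
  | succ q ih =>
    have h : (q + 1) * m + r = m + (q * m + r) := by ring
    rw [h, Finset.sum_range_add]
    have h2 : ∀ k, L^[m + k] y = L^[k] y := by
      intro k
      rw [Nat.add_comm, Function.iterate_add_apply, hy]
    simp only [h2]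
    rw [ih]; push_cast; ring

/-- **Growth of a continuous cocycle over a system with specification** (scalar form of the
key expansion lemma): if `γ` is the infimum over all periodic orbits of the orbit averages of
a continuous function `a`, then for every `λ < γ` the Birkhoff sums satisfy
`S_n a(x) ≥ c + nλ` for all `x` and `n`, for some constant `c`. -/
theorem cocycle_growth_specification
    {X : Type*} [MetricSpace X] [CompactSpace X] [Nonempty X]
    (L : X → X) (hL : Continuous L) (hspec : SpecificationProperty L)
    (a : X → ℝ) (ha : Continuous a)
    (γ : ℝ)
    (hγ : γ = sInf {r : ℝ | ∃ m : ℕ, 1 ≤ m ∧ ∃ y : X, L^[m] y = y ∧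
      r = (∑ k ∈ Finset.range m, a (L^[k] y)) / m}) :
    ∀ lam : ℝ, lam < γ → ∃ c : ℝ, ∀ x : X, ∀ n : ℕ,
      c + n * lam ≤ ∑ k ∈ Finset.range n, a (L^[k] x) := by
  intro lam hlam
  obtain ⟨B, hB⟩ : ∃ B : ℝ, ∀ x, |a x| ≤ B := by
    obtain ⟨B, hB⟩ := isCompact_univ.exists_bound_of_continuousOn ha.continuousOn
    exact ⟨B, fun x => hB x trivial⟩
  have hB0 : 0 ≤ B := (abs_nonneg _).trans (hB (Classical.arbitrary X))
  have hper : ∀ m : ℕ, 1 ≤ m → ∀ y, L^[m] y = y →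
      m * γ ≤ ∑ k ∈ Finset.range m, a (L^[k] y) := by
    intro m hm y hy
    have hm' : (0 : ℝ) < m := by exact_mod_cast hm
    have : γ ≤ (∑ k ∈ Finset.range m, a (L^[k] y)) / m := by
      rw [hγ]
      refine csInf_le ⟨-B, ?_⟩ ⟨m, hm, y, hy, rfl⟩
      rintro r ⟨p, hp, z, -, rfl⟩
      have hp' : (0 : ℝ) < p := by exact_mod_cast hp
      rw [le_div_iff₀ hp']
      have := Finset.card_nsmul_le_sum (Finset.range p) (fun k => a (L^[k] z)) (-B)
        (fun k _ => (abs_le.mp (hB _)).1)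
      simp only [Finset.card_range, nsmul_eq_mul] at this
      linarith
    rw [le_div_iff₀ hm'] at this
    linarith
  obtain ⟨δ, hδ, hδ2⟩ : ∃ δ : ℝ, 0 < δ ∧ lam = γ - 2 * δ :=
    ⟨(γ - lam) / 2, by linarith, by ring⟩
  obtain ⟨ε, hε, hu⟩ := Metric.uniformContinuous_iff.mp
    (CompactSpace.uniformContinuous_of_continuous ha) δ hδ
  obtain ⟨l, hl⟩ := hspec (ε / 2) (by linarith)
  have hC0 : 0 ≤ l * (|γ| + B) := by positivity
  refine ⟨-(l * (|γ| + B)), ?_⟩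
  intro x n
  induction n using Nat.strong_induction_on generalizing x with
  | _ n ih =>
  rcases Nat.eq_zero_or_pos n with rfl | hn
  · simp only [Nat.cast_zero, Finset.range_zero, Finset.sum_empty]; linarith
  obtain ⟨m, hm1, hml, y, hy, hxy⟩ := hl n hn x
  have hcmp : ∑ k ∈ Finset.range n, a (L^[k] y) - n * δ ≤ ∑ k ∈ Finset.range n, a (L^[k] x) := by
    have : ∑ k ∈ Finset.range n, (a (L^[k] y) - δ) ≤ ∑ k ∈ Finset.range n, a (L^[k] x) := by
      refine Finset.sum_le_sum fun k hk => ?_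
      have h1 := hu (lt_of_le_of_lt (hxy k (Finset.mem_range.mp hk)) (by linarith))
      rw [Real.dist_eq] at h1
      linarith [(abs_lt.mp h1).1]
    simpa [Finset.sum_sub_distrib] using this
  have hn' : (0 : ℝ) < n := by exact_mod_cast hn
  have hnδ : 0 < n * δ := by positivity
  have hpm := hper m hm1 y hy
  rcases lt_or_ge n m with h | h
  · obtain ⟨j, rfl⟩ := Nat.exists_eq_add_of_lt h
    have hj : j + 1 ≤ l := by omega
    have hj' : (j : ℝ) + 1 ≤ l := by exact_mod_cast hj
    rw [add_assoc, Finset.sum_range_add] at hpm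
    have h3 := Finset.sum_le_card_nsmul (Finset.range (j + 1)) (fun k => a (L^[n + k] y)) B
        (fun k _ => (abs_le.mp (hB _)).2)
    simp only [Finset.card_range, nsmul_eq_mul] at h3
    push_cast at h3 hpm
    have h4 : ((j : ℝ) + 1) * B ≤ l * B := by gcongr
    have h5 : ((j : ℝ) + 1) * |γ| ≤ l * |γ| := by gcongr
    have h6 : ((j : ℝ) + 1) * (-|γ|) ≤ (j + 1) * γ := by
      gcongr; exact neg_abs_le γ
    rw [hδ2]
    linarith
  · have hdm := Nat.div_add_mod n m
    have hr : n % m < m := Nat.mod_lt _ hm1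
    have hq : 1 ≤ n / m := (Nat.one_le_div_iff hm1).mpr h
    generalize n / m = q at *
    generalize n % m = r at *
    have hmq : m ≤ m * q := Nat.le_mul_of_pos_right m hq
    have hih := ih r (by omega) y
    have hsum := aux_periodic L a m y hy r q
    rw [show q * m + r = n by rw [mul_comm]; exact hdm] at hsum
    have h2r : 2 * (r : ℝ) ≤ n := by
      have : 2 * r ≤ n := by omega
      exact_mod_cast this
    have hn2 : (n : ℝ) = m * q + r := by exact_mod_cast hdm.symm
    have h7 := mul_le_mul_of_nonneg_left hpm (Nat.cast_nonneg (α := ℝ) q)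
    have h8 := mul_le_mul_of_nonneg_right h2r hδ.le
    have h9 : (n : ℝ) * γ = q * (m * γ) + r * γ := by rw [hn2]; ring
    rw [hδ2] at hih ⊢
    linarith
end

section
/- Bounded ratio distortion at all scales implies C^{1+α}-conformality at a point: let M ⊆ ℂ, let a, b ∈ ℂ, let h : M → ℂ, and let α > 0, C > 0, ε₀ > 0. Assume: (i) for every r ∈ (0, ε₀) there exists z ∈ M with |z − a| = r; (ii) h(u) ≠ b for every u ∈ M with 0 < |u − a| ≤ ε₀; (iii) for all u, v ∈ M with 0 < |v − a| ≤ |u − a| ≤ ε₀ and |u − a| ≤ 2|v − a|, one has |((h(u) − b)·(v − a)) / ((h(v) − b)·(u − a)) − 1| ≤ C·|u − a|^α. Then there exist τ ∈ ℂ \ {0} and C′ > 0 such that for every u ∈ M with 0 < |u − a| ≤ ε₀, |(h(u) − b)/(τ·(u − a)) − 1| ≤ C′·|u − a|^α; in particular (h(u) − b)/(u − a) → τ as u → a within M. -/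
open Filter

lemma seq_aux (w : ℕ → ℂ) (K q : ℝ) (hK : 0 ≤ K) (hq : 0 < q) (hq1 : q < 1)
    (hw : ∀ n, w n ≠ 0) (hd : ∀ n, ‖w (n + 1) / w n - 1‖ ≤ K * q ^ n) :
    ∃ W : ℂ, W ≠ 0 ∧ ∃ B : ℝ, 0 < B ∧ ∀ m, ‖W / w m - 1‖ ≤ B * q ^ m := by
  have h1q : 0 < 1 - q := by linarith
  set S : ℝ := K / (1 - q) with hS
  have hS0 : 0 ≤ S := by positivity
  have hprod : ∀ m n, w (m + n) / w m
      = ∏ i ∈ Finset.range n, (1 + (w (m + i + 1) / w (m + i) - 1)) := by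
    intro m n
    induction n with
    | zero => simp [hw m]
    | succ k ih =>
      rw [Finset.prod_range_succ, ← ih, ← add_assoc m k 1]
      have h1 := hw m
      have h2 := hw (m + k)
      field_simp
      ring
  have key : ∀ m n, ‖w (m + n) / w m - 1‖ ≤ (S * Real.exp S + 1) * q ^ m := by
    intro m n
    rw [hprod]
    refine (Finset.norm_prod_one_add_sub_one_le _ _).trans ?_
    have hqm : 0 < q ^ m := by positivity
    have hqm1 : q ^ m ≤ 1 := pow_le_one₀ hq.le hq1.le
    have hsum : ∑ i ∈ Finset.range n, ‖w (m + i + 1) / w (m + i) - 1‖ ≤ S * q ^ m := by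
      calc ∑ i ∈ Finset.range n, ‖w (m + i + 1) / w (m + i) - 1‖
          ≤ ∑ i ∈ Finset.range n, K * q ^ m * q ^ i := by
            refine Finset.sum_le_sum fun i _ => (hd (m + i)).trans (le_of_eq ?_)
            rw [pow_add]; ring
        _ = K * q ^ m * ∑ i ∈ Finset.range n, q ^ i := by rw [Finset.mul_sum]
        _ ≤ K * q ^ m * (1 - q)⁻¹ := by
            gcongr
            rw [← tsum_geometric_of_lt_one hq.le hq1]
            exact (summable_geometric_of_lt_one hq.le hq1).sum_le_tsum _
              (fun i _ => by positivity)
        _ = S * q ^ m := by rw [hS]; ring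
    have hle : S * q ^ m ≤ S := mul_le_of_le_one_right hS0 hqm1
    have h3 : Real.exp (S * q ^ m) - 1 ≤ S * q ^ m * Real.exp (S * q ^ m) := by
      have h4 := Real.add_one_le_exp (-(S * q ^ m))
      have h5 := mul_le_mul_of_nonneg_right h4 (Real.exp_pos (S * q ^ m)).le
      rw [← Real.exp_add] at h5
      simp at h5
      linarith
    have h6 : S * q ^ m * Real.exp (S * q ^ m) ≤ S * q ^ m * Real.exp S := by gcongr
    have h7 := Real.exp_le_exp.2 hsum
    nlinarith
  set B := S * Real.exp S + 1 with hB
  have hB0 : 0 < B := by positivity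
  have hbd : ∀ n, ‖w n‖ ≤ ‖w 0‖ * (1 + B) := by
    intro n
    have h1 := key 0 n
    have h2 : w n = w 0 * (1 + (w (0 + n) / w 0 - 1)) := by
      have := hw 0
      field_simp
      simp
    rw [h2, norm_mul]
    gcongr
    refine (norm_add_le _ _).trans ?_
    simpa using h1
  have hcau : CauchySeq w := by
    refine cauchySeq_of_le_geometric q (‖w 0‖ * (1 + B) * K) hq1 fun n => ?_
    rw [dist_comm, dist_eq_norm]
    have h2 : w (n + 1) - w n = w n * (w (n + 1) / w n - 1) := by
      have := hw n
      field_simp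
    rw [h2, norm_mul, mul_assoc]
    exact mul_le_mul (hbd n) (hd n) (norm_nonneg _) (by positivity)
  obtain ⟨W, hW⟩ := cauchySeq_tendsto_of_complete hcau
  have hlim : ∀ m, ‖W / w m - 1‖ ≤ B * q ^ m := by
    intro m
    have ht : Tendsto (fun n => ‖w (m + n) / w m - 1‖) atTop (nhds ‖W / w m - 1‖) := by
      have h1 : Tendsto (fun n => w (m + n)) atTop (nhds W) := by
        have := (tendsto_add_atTop_iff_nat m).2 hW
        simpa [add_comm] using this
      exact ((h1.div_const _).sub_const _).norm
    exact le_of_tendsto' ht (key m)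
  refine ⟨W, ?_, B, hB0, hlim⟩
  rintro rfl
  obtain ⟨m, hm⟩ := exists_pow_lt_of_lt_one (inv_pos.2 hB0) hq1
  have h1 := hlim m
  simp at h1
  have h2 := mul_lt_mul_of_pos_left hm hB0
  rw [mul_inv_cancel₀ hB0.ne'] at h2
  linarith

/-- **Bounded ratio distortion at all scales implies `C^{1+α}`-conformality at a point.**
If around `a` the set `M` meets every small circle, `h − b` does not vanish on
`M ∩ (closedBall a ε₀ \ {a})`, and the ratio distortion of `h` about `a` in every scale
`ε ≤ ε₀` is of order `ε^α` (for pairs of points at comparable distances from `a`), then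
there is `τ ≠ 0` with `h(u) = b + τ (u − a)(1 + O(|u − a|^α))` on `M`; in particular
`(h(u) − b)/(u − a) → τ` as `u → a` within `M`. -/
theorem ratio_distortion_implies_conformal
    (M : Set ℂ) (a b : ℂ) (h : ℂ → ℂ) (α C ε₀ : ℝ)
    (hα : 0 < α) (hC : 0 < C) (hε₀ : 0 < ε₀)
    (hcircles : ∀ r : ℝ, 0 < r → r < ε₀ → ∃ z ∈ M, ‖z - a‖ = r)
    (hne : ∀ u ∈ M, 0 < ‖u - a‖ → ‖u - a‖ ≤ ε₀ → h u ≠ b)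
    (hdist : ∀ u ∈ M, ∀ v ∈ M, 0 < ‖v - a‖ →
      ‖v - a‖ ≤ ‖u - a‖ → ‖u - a‖ ≤ ε₀ →
      ‖u - a‖ ≤ 2 * ‖v - a‖ →
      ‖(h u - b) * (v - a) / ((h v - b) * (u - a)) - 1‖ ≤
        C * ‖u - a‖ ^ α) :
    ∃ τ : ℂ, τ ≠ 0 ∧ (∃ C' : ℝ, 0 < C' ∧ ∀ u ∈ M, 0 < ‖u - a‖ →
      ‖u - a‖ ≤ ε₀ →
      ‖(h u - b) / (τ * (u - a)) - 1‖ ≤ C' * ‖u - a‖ ^ α) ∧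
      Tendsto (fun u : ℂ => (h u - b) / (u - a)) (nhdsWithin a (M \ {a})) (nhds τ) := by
  have hz : ∀ n : ℕ, ∃ z ∈ M, ‖z - a‖ = ε₀ / 2 ^ (n + 1) := fun n =>
    hcircles _ (by positivity)
      (div_lt_self hε₀ (one_lt_pow₀ (by norm_num) (by omega)))
  choose z hzM hzr using hz
  have hzpos : ∀ n, 0 < ‖z n - a‖ := fun n => by rw [hzr]; positivity
  have hzle : ∀ n, ‖z n - a‖ ≤ ε₀ := fun n => by
    rw [hzr]; exact div_le_self hε₀.le (one_le_pow₀ (by norm_num))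
  have hza : ∀ n, z n - a ≠ 0 := fun n => norm_pos_iff.1 (hzpos n)
  have hzb : ∀ n, h (z n) - b ≠ 0 := fun n =>
    sub_ne_zero.2 (hne _ (hzM n) (hzpos n) (hzle n))
  set q : ℝ := (1 / 2 : ℝ) ^ α with hqdef
  have hq : 0 < q := by positivity
  have hq1 : q < 1 := Real.rpow_lt_one (by norm_num) (by norm_num) hα
  have hscale : ∀ n : ℕ, (ε₀ / 2 ^ n) ^ α = ε₀ ^ α * q ^ n := by
    intro n
    have : ε₀ / 2 ^ n = ε₀ * (1 / 2) ^ n := by rw [one_div, inv_pow]; rfl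
    rw [this, Real.mul_rpow hε₀.le (by positivity), hqdef,
      ← Real.rpow_natCast, ← Real.rpow_natCast, ← Real.rpow_mul (by norm_num),
      ← Real.rpow_mul (by norm_num), mul_comm α]
  have hε : 0 < ε₀ ^ α := by positivity
  obtain ⟨W, hW0, B, hB, hW⟩ := seq_aux (fun n => (z n - a) / (h (z n) - b))
    (C * (ε₀ ^ α * q)) q (by positivity) hq hq1
    (fun n => div_ne_zero (hza n) (hzb n)) (by
      intro n
      have h1 := hdist (z n) (hzM n) (z (n + 1)) (hzM _) (hzpos _)
        (by rw [hzr, hzr]; gcongr <;> norm_num)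
        (hzle n) (by rw [hzr, hzr, pow_succ 2 (n + 1)]; apply le_of_eq; field_simp)
      rw [hzr, hscale] at h1
      have e : (z (n + 1) - a) / (h (z (n + 1)) - b) / ((z n - a) / (h (z n) - b))
        = (h (z n) - b) * (z (n + 1) - a) / ((h (z (n + 1)) - b) * (z n - a)) := by
        have := hza n
        have := hzb n
        have := hzb (n + 1)
        field_simp
      rw [e]
      refine h1.trans (le_of_eq ?_)
      ring)
  have hmain : ∀ u ∈ M, 0 < ‖u - a‖ → ‖u - a‖ ≤ ε₀ →
      ‖(h u - b) / (W⁻¹ * (u - a)) - 1‖ ≤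
        (C + B / (ε₀ ^ α * q) + C * B) * ‖u - a‖ ^ α := by
    intro u hu hu0 hule
    obtain ⟨n, hn1, hn2⟩ := exists_nat_pow_near
      ((one_le_div hu0).2 hule) (one_lt_two : (1 : ℝ) < 2)
    rw [le_div_iff₀ hu0] at hn1
    rw [div_lt_iff₀ hu0] at hn2
    have hlow : ε₀ / 2 ^ (n + 1) ≤ ‖u - a‖ := by
      rw [div_le_iff₀ (by positivity)]; linarith
    have hx := hdist u hu (z n) (hzM n) (hzpos n) (by rw [hzr]; exact hlow) hule (by
      rw [hzr, pow_succ]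
      have : 2 * (ε₀ / (2 ^ n * 2)) = ε₀ / 2 ^ n := by field_simp
      rw [this, le_div_iff₀ (by positivity)]; linarith)
    have hy := hW n
    have hr : ε₀ ^ α * q ^ (n + 1) ≤ ‖u - a‖ ^ α := by
      rw [← hscale]
      exact Real.rpow_le_rpow (by positivity) hlow hα.le
    have hqn : B * q ^ n ≤ B / (ε₀ ^ α * q) * ‖u - a‖ ^ α := by
      calc B * q ^ n = B / (ε₀ ^ α * q) * (ε₀ ^ α * q ^ (n + 1)) := by
            rw [pow_succ]; field_simp
        _ ≤ _ := by gcongr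
    have hqB : B * q ^ n ≤ B := mul_le_of_le_one_right hB.le (pow_le_one₀ hq.le hq1.le)
    have hua : u - a ≠ 0 := norm_pos_iff.1 hu0
    set x := (h u - b) * (z n - a) / ((h (z n) - b) * (u - a)) - 1 with hxd
    set y := W / ((z n - a) / (h (z n) - b)) - 1 with hyd
    have e : (h u - b) / (W⁻¹ * (u - a)) - 1 = x + y + x * y := by
      have e1 : (h u - b) / (W⁻¹ * (u - a)) = (x + 1) * (y + 1) := by
        rw [hxd, hyd, sub_add_cancel, sub_add_cancel]
        have := hza n
        have := hzb n
        field_simp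
      rw [e1]; ring
    rw [e]
    have hxy : ‖x * y‖ ≤ C * ‖u - a‖ ^ α * B := by
      rw [norm_mul]
      exact mul_le_mul hx (hy.trans hqB) (norm_nonneg _) (by positivity)
    have h1 := norm_add_le (x + y) (x * y)
    have h2 := norm_add_le x y
    have h3 : ‖y‖ ≤ B * q ^ n := hy
    linarith
  refine ⟨W⁻¹, inv_ne_zero hW0, ⟨_, by positivity, hmain⟩, ?_⟩
  set C' := C + B / (ε₀ ^ α * q) + C * B with hC'
  rw [tendsto_iff_norm_sub_tendsto_zero]
  have hlim : Tendsto (fun u : ℂ => ‖W⁻¹‖ * (C' * ‖u - a‖ ^ α))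
      (nhdsWithin a (M \ {a})) (nhds 0) := by
    have hc : Continuous (fun u : ℂ => ‖W⁻¹‖ * (C' * ‖u - a‖ ^ α)) :=
      continuous_const.mul (continuous_const.mul
        ((continuous_id.sub continuous_const).norm.rpow_const (fun _ => Or.inr hα.le)))
    have := hc.tendsto a
    simp only [sub_self, norm_zero, Real.zero_rpow hα.ne', mul_zero] at this
    exact this.mono_left nhdsWithin_le_nhds
  refine squeeze_zero' (Eventually.of_forall fun _ => norm_nonneg _) ?_ hlim
  filter_upwards [self_mem_nhdsWithin,
    mem_nhdsWithin_of_mem_nhds (Metric.closedBall_mem_nhds a hε₀)] with u hu hu2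
  have hua : u - a ≠ 0 := sub_ne_zero.2 hu.2
  have h1 := hmain u hu.1 (norm_pos_iff.2 hua) (by simpa [dist_eq_norm] using hu2)
  have e : (h u - b) / (u - a) - W⁻¹ = W⁻¹ * ((h u - b) / (W⁻¹ * (u - a)) - 1) := by
    field_simp
  rw [e, norm_mul]
  gcongr
end

section
/- Cauchy Inequality in complex Banach spaces: let B and D be complex Banach spaces and let f be a complex analytic map from the open unit ball of B to D with f(0) = 0 and f(x) ∈ ball(0,1) ⊆ D for every x in the open unit ball of B. Then the Fréchet derivative satisfies ‖Df(0)‖ ≤ 1, and more generally ‖Df(x)‖ ≤ 1/(1 − ‖x‖) for every x in the open unit ball of B. -/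
open Metric

/-- **Cauchy Inequality in complex Banach spaces.** If `f` is complex analytic from the open
unit ball of `B` to `D`, `f(0) = 0`, and `f` maps the unit ball into the open unit ball of
`D`, then `‖Df(0)‖ ≤ 1` and more generally `‖Df(x)‖ ≤ 1/(1 − ‖x‖)` on the unit ball. -/
theorem cauchy_inequality_banach
    {B D : Type*} [NormedAddCommGroup B] [NormedSpace ℂ B] [CompleteSpace B]
    [NormedAddCommGroup D] [NormedSpace ℂ D] [CompleteSpace D]
    (f : B → D) (hf : AnalyticOnNhd ℂ f (Metric.ball (0 : B) 1))
    (hf0 : f 0 = 0)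
    (hmap : ∀ x ∈ Metric.ball (0 : B) 1, f x ∈ Metric.ball (0 : D) 1) :
    ‖fderiv ℂ f 0‖ ≤ 1 ∧
      ∀ x ∈ Metric.ball (0 : B) 1, ‖fderiv ℂ f x‖ ≤ 1 / (1 - ‖x‖) := by
  have key : ∀ x ∈ Metric.ball (0 : B) 1, ‖fderiv ℂ f x‖ ≤ 1 / (1 - ‖x‖) := by
    intro x hx
    have hx1 : ‖x‖ < 1 := by simpa using hx
    have hs : 0 < 1 - ‖x‖ := by linarith
    have hr : ∀ r : ℝ, 0 < r → r < 1 - ‖x‖ → ‖fderiv ℂ f x‖ ≤ 1 / r := by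
      intro r hr0 hr1
      refine ContinuousLinearMap.opNorm_le_bound _ (by positivity) fun v => ?_
      rcases eq_or_ne v 0 with rfl | hv
      · simp
      have hv0 : 0 < ‖v‖ := norm_pos_iff.mpr hv
      have hR : 0 < r / ‖v‖ := by positivity
      have hin : ∀ z ∈ Metric.closedBall (0 : ℂ) (r / ‖v‖),
          x + z • v ∈ Metric.ball (0 : B) 1 := by
        intro z hz
        have hz' : ‖z‖ ≤ r / ‖v‖ := by simpa using hz
        have h1 : ‖z‖ * ‖v‖ ≤ r := (le_div_iff₀ hv0).mp hz'
        have h2 := norm_add_le x (z • v)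
        rw [norm_smul] at h2
        rw [mem_ball_zero_iff]
        linarith
      have hline : ∀ z : ℂ, HasDerivAt (fun z : ℂ => x + z • v) v z := by
        intro z
        simpa using ((hasDerivAt_id z).smul_const v).const_add x
      have hder : ∀ z ∈ Metric.closedBall (0 : ℂ) (r / ‖v‖),
          HasDerivAt (fun z : ℂ => f (x + z • v)) (fderiv ℂ f (x + z • v) v) z := by
        intro z hz
        exact (hf _ (hin z hz)).differentiableAt.hasFDerivAt.comp_hasDerivAt z (hline z)
      have hd : DiffContOnCl ℂ (fun z : ℂ => f (x + z • v)) (Metric.ball 0 (r / ‖v‖)) := by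
        apply DifferentiableOn.diffContOnCl
        rw [closure_ball _ hR.ne']
        exact fun z hz => (hder z hz).differentiableAt.differentiableWithinAt
      have hC := Complex.norm_deriv_le_of_forall_mem_sphere_norm_le (C := 1) hR hd (by
        intro z hz
        have := hmap _ (hin z (Metric.sphere_subset_closedBall hz))
        exact (mem_ball_zero_iff.mp this).le)
      rw [(hder 0 (Metric.mem_closedBall_self hR.le)).deriv] at hC
      simp only [zero_smul, add_zero] at hC
      calc _ ≤ _ := hC
        _ = 1 / r * ‖v‖ := by field_simp
    rw [le_div_iff₀ hs]
    by_contra! h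
    have hN : 0 < ‖fderiv ℂ f x‖ := by
      by_contra! h0
      nlinarith
    have h1 : 1 / ‖fderiv ℂ f x‖ < 1 - ‖x‖ := by
      rw [div_lt_iff₀ hN]; linarith
    obtain ⟨r, ha, hb⟩ := exists_between h1
    have hr0 : 0 < r := lt_trans (by positivity) ha
    have h2 := (le_div_iff₀ hr0).mp (hr r hr0 hb)
    have h3 := (div_lt_iff₀ hN).mp ha
    linarith
  exact ⟨by simpa using key 0 (by simp), key⟩
end

section
/- Schwarz Lemma in complex Banach spaces: let 0 < r < 1/2, let B and D be complex Banach spaces, and let f be a complex analytic map from the open unit ball of B to D with f(0) = 0 and f(x) ∈ ball(0, r) ⊆ D for every x in the open unit ball of B. Then the restriction of f to the ball of radius r is a uniform contraction: ‖f(x) − f(y)‖ ≤ q·‖x − y‖ for all x, y ∈ ball(0, r) ⊆ B, where q = r/(1 − r) < 1. -/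
open Metric

/-- **Schwarz Lemma in complex Banach spaces.** Let `0 < r < 1/2` and let `f` be a complex
analytic map from the open unit ball of `B` to `D` with `f(0) = 0` and `f(x) ∈ ball(0, r)`
for every `x` in the unit ball.  Then on `ball(0, r)` the map `f` is a uniform contraction
with constant `q = r/(1 − r) < 1`. -/
theorem schwarz_lemma_banach
    {B D : Type*} [NormedAddCommGroup B] [NormedSpace ℂ B] [CompleteSpace B]
    [NormedAddCommGroup D] [NormedSpace ℂ D] [CompleteSpace D]
    (r : ℝ) (hr0 : 0 < r) (hr : r < 1 / 2)
    (f : B → D) (hf : AnalyticOnNhd ℂ f (Metric.ball (0 : B) 1))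
    (hf0 : f 0 = 0)
    (hmap : ∀ x ∈ Metric.ball (0 : B) 1, f x ∈ Metric.ball (0 : D) r) :
    r / (1 - r) < 1 ∧
      ∀ x ∈ Metric.ball (0 : B) r, ∀ y ∈ Metric.ball (0 : B) r,
        ‖f x - f y‖ ≤ r / (1 - r) * ‖x - y‖ := by
  have h1r : 0 < 1 - r := by linarith
  refine ⟨by rw [div_lt_one h1r]; linarith, ?_⟩
  intro x hx y hy
  rcases eq_or_ne x y with rfl | hxy
  · simp
  have hv : 0 < ‖x - y‖ := norm_pos_iff.2 (sub_ne_zero.2 hxy)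
  set v := x - y with hvdef
  have hx' : ‖x‖ < r := by simpa using hx
  have hy' : ‖y‖ < r := by simpa using hy
  have hR : 0 < (1 - r) / ‖v‖ := div_pos h1r hv
  have hdiff : ∀ t : ℂ, y + t • v ∈ Metric.ball (0 : B) 1 →
      DifferentiableAt ℂ (fun t : ℂ => f (y + t • v)) t := by
    intro t ht
    have h1 : DifferentiableAt ℂ f (y + t • v) := (hf _ ht).differentiableAt
    have h2 : DifferentiableAt ℂ (fun t : ℂ => y + t • v) t := by fun_prop
    exact DifferentiableAt.comp t h1 h2
  have key : ∀ t ∈ segment ℝ (0 : ℂ) 1, ‖y + t • v‖ < r := by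
    rintro t ⟨a, b, ha, hb, hab, rfl⟩
    have e : y + (a • (0 : ℂ) + b • (1 : ℂ)) • v = (a : ℂ) • y + (b : ℂ) • x := by
      have : (a : ℂ) = 1 - b := by rw [eq_sub_iff_add_eq]; exact_mod_cast hab
      rw [this, hvdef]
      simp only [smul_zero, zero_add, Complex.real_smul, mul_one]
      module
    rw [e]
    have h1 : ‖(a : ℂ) • y + (b : ℂ) • x‖ ≤ a * ‖y‖ + b * ‖x‖ := by
      refine (norm_add_le _ _).trans ?_
      simp [norm_smul, abs_of_nonneg ha, abs_of_nonneg hb]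
    have hmax : max ‖y‖ ‖x‖ < r := max_lt hy' hx'
    have h2 := mul_le_mul_of_nonneg_left (le_max_left ‖y‖ ‖x‖) ha
    have h3 := mul_le_mul_of_nonneg_left (le_max_right ‖y‖ ‖x‖) hb
    have h4 : a * max ‖y‖ ‖x‖ + b * max ‖y‖ ‖x‖ = max ‖y‖ ‖x‖ := by
      rw [← add_mul, hab, one_mul]
    linarith
  have big : ∀ t ∈ segment ℝ (0 : ℂ) 1, ∀ z ∈ Metric.closedBall t ((1 - r) / ‖v‖),
      y + z • v ∈ Metric.ball (0 : B) 1 := by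
    intro t ht z hz
    have h1 := key t ht
    rw [mem_closedBall, dist_eq_norm, le_div_iff₀ hv, ← norm_smul] at hz
    have e : y + z • v = (y + t • v) + (z - t) • v := by module
    rw [mem_ball_zero_iff, e]
    linarith [norm_add_le (y + t • v) ((z - t) • v)]
  have bound : ∀ t ∈ segment ℝ (0 : ℂ) 1,
      ‖deriv (fun t : ℂ => f (y + t • v)) t‖ ≤ r / (1 - r) * ‖v‖ := by
    intro t ht
    have h := Complex.norm_deriv_le_of_forall_mem_sphere_norm_le
      (f := fun t : ℂ => f (y + t • v)) (c := t) (C := r) hR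
      (DifferentiableOn.diffContOnCl_ball (U := Metric.closedBall t ((1 - r) / ‖v‖))
        (fun z hz => (hdiff z (big t ht z hz)).differentiableWithinAt) subset_rfl)
      (fun z hz => (mem_ball_zero_iff.1
        (hmap _ (big t ht z (sphere_subset_closedBall hz)))).le)
    refine h.trans (le_of_eq ?_)
    field_simp
  have := Convex.norm_image_sub_le_of_norm_deriv_le
    (f := fun t : ℂ => f (y + t • v)) (s := segment ℝ (0 : ℂ) 1) (x := 0) (y := 1)
    (fun t ht => hdiff t (big t ht t (mem_closedBall_self hR.le))) bound
    (convex_segment _ _) (left_mem_segment _ _ _) (right_mem_segment _ _ _)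
  simpa [hvdef] using this
end

section
/- Local extension of smooth holomorphic motions: let B be a complex Banach space, Λ ⊆ B an open set containing 0, Q ⊆ ℂ a compact set, and U ⊆ ℂ an open neighborhood of Q. Let h : Λ × U → ℂ be a smooth holomorphic motion of U over (Λ, 0): h(0, z) = z for all z ∈ U; for each λ ∈ Λ the map z ↦ h(λ, z) is injective on U; h is infinitely differentiable as a map on the open subset Λ × U of B × ℂ; and for each fixed z ∈ U the map λ ↦ h(λ, z) is complex analytic on Λ. Then there exist an open neighborhood Λ′ ⊆ Λ of 0 and a map H : Λ′ × ℂ → ℂ such that: H is infinitely differentiable on Λ′ × ℂ; for each fixed z ∈ ℂ the map λ ↦ H(λ, z) is complex analytic on Λ′; H(0, z) = z for all z ∈ ℂ; for each λ ∈ Λ′ the map z ↦ H(λ, z) is a diffeomorphism of ℂ onto itself; and H(λ, z) = h(λ, z) for all λ ∈ Λ′ and all z ∈ Q. -/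
open Filter

theorem cutoff_aux (Q U : Set ℂ) (hQ : IsCompact Q) (hU : IsOpen U) (hQU : Q ⊆ U) :
    ∃ (K : Set ℂ) (f : ℂ → ℝ), IsCompact K ∧ K ⊆ U ∧ ContDiff ℝ (⊤ : ℕ∞) f ∧
      (∀ z ∈ Q, f z = 1) ∧ (∀ z, z ∉ K → f z = 0) := by
  obtain ⟨K, hK, hQK, hKU⟩ := exists_compact_between hQ hU hQU
  obtain ⟨f, hf0, hf1, -⟩ := exists_contMDiffMap_zero_one_of_isClosed (n := (⊤ : ℕ∞))
    (modelWithCornersSelf ℝ ℂ)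
    (isOpen_interior (s := K)).isClosed_compl hQ.isClosed
    (Set.disjoint_left.2 fun x hx hx' => hx (hQK hx'))
  refine ⟨K, f, hK, hKU, f.contMDiff.contDiff, fun z hz => hf1 hz, fun z hz => hf0 ?_⟩
  exact fun h => hz (interior_subset h)

theorem perturb_aux (g : ℂ → ℂ) (hg : ContDiff ℝ (⊤ : ℕ∞) g)
    (hb : ∀ z, ‖fderiv ℝ g z‖ ≤ 1 / 2) :
    ∃ e : ℂ ≃ ℂ, (⇑e = fun z => z + g z) ∧
          ContDiff ℝ (⊤ : ℕ∞) (⇑e) ∧ ContDiff ℝ (⊤ : ℕ∞) (⇑e.symm) := by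
  have hd : Differentiable ℝ g := hg.differentiable (by simp)
  have hL : LipschitzWith (1 / 2) g := lipschitzWith_of_nnnorm_fderiv_le hd (fun z => by
    rw [← NNReal.coe_le_coe]; simpa using hb z)
  have hA : ApproximatesLinearOn (fun z => z + g z)
      ((ContinuousLinearEquiv.refl ℝ ℂ : ℂ ≃L[ℝ] ℂ) : ℂ →L[ℝ] ℂ) Set.univ (1 / 2) := by
    intro x _ y _
    have := hL.dist_le_mul x y
    rw [dist_eq_norm, dist_eq_norm] at this
    have e1 : (x + g x) - (y + g y) - (x - y) = g x - g y := by ring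
    change ‖(x + g x) - (y + g y) - (x - y)‖ ≤ _
    rw [e1]
    exact this
  have hc : Subsingleton ℂ ∨ (1 / 2 : NNReal) <
      ‖((ContinuousLinearEquiv.refl ℝ ℂ).symm : ℂ →L[ℝ] ℂ)‖₊⁻¹ := by
    right
    have : ‖((ContinuousLinearEquiv.refl ℝ ℂ).symm : ℂ →L[ℝ] ℂ)‖₊ = 1 := by
      have : ((ContinuousLinearEquiv.refl ℝ ℂ).symm : ℂ →L[ℝ] ℂ) = 1 := by ext <;> simp
      rw [this]; simp
    rw [this, ← NNReal.coe_lt_coe]; norm_num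
  let e := hA.toHomeomorph _ hc
  have he : ⇑e = fun z => z + g z := rfl
  have hs : ContDiff ℝ (⊤ : ℕ∞) (⇑e) := by rw [he]; exact contDiff_id.add hg
  have hu : ∀ z, IsUnit (1 + fderiv ℝ g z) := fun z => by
    have := isUnit_one_sub_of_norm_lt_one (x := - fderiv ℝ g z)
      (by rw [norm_neg]; linarith [hb z])
    simpa using this
  refine ⟨e.toEquiv, he, hs, ?_⟩
  refine Homeomorph.contDiff_symm e
    (f₀' := fun z => ContinuousLinearEquiv.unitsEquiv ℝ ℂ (hu z).unit) (fun z => ?_) hs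
  have h1 : HasFDerivAt (fun z => z + g z) (1 + fderiv ℝ g z) z :=
    (hasFDerivAt_id z).add (hd z).hasFDerivAt
  have h2 : ((ContinuousLinearEquiv.unitsEquiv ℝ ℂ (hu z).unit : ℂ ≃L[ℝ] ℂ) : ℂ →L[ℝ] ℂ)
      = 1 + fderiv ℝ g z := by
    ext w <;> rfl
  rw [he]
  exact h1.congr_fderiv h2.symm

/-- **Local extension of smooth holomorphic motions.**  Let `h` be a smooth holomorphic
motion of an open neighborhood `U` of a compact set `Q ⊆ ℂ` over a pointed open Banach
domain `(Λ, 0)`: `h(0, ·) = id`, each `h(λ, ·)` is injective on `U`, `h` is jointly `C^∞`,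
and `h(·, z)` is complex analytic on `Λ` for each `z ∈ U`.  Then there is a smooth
holomorphic motion `H` of the whole plane `ℂ` over some neighborhood `Λ' ⊆ Λ` of `0`, each
`H(λ, ·)` being a diffeomorphism of `ℂ`, whose restriction to `Q` coincides with `h`. -/
theorem smooth_holomorphic_motion_extension
    {B : Type*} [NormedAddCommGroup B] [NormedSpace ℂ B] [CompleteSpace B]
    (Λ : Set B) (hΛ : IsOpen Λ) (hΛ0 : (0 : B) ∈ Λ)
    (Q : Set ℂ) (hQ : IsCompact Q)
    (U : Set ℂ) (hUopen : IsOpen U) (hQU : Q ⊆ U)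
    (h : B → ℂ → ℂ)
    (h_id : ∀ z ∈ U, h 0 z = z)
    (h_inj : ∀ lam ∈ Λ, Set.InjOn (h lam) U)
    (h_smooth : ContDiffOn ℝ (⊤ : ℕ∞) (fun pr : B × ℂ => h pr.1 pr.2) (Λ ×ˢ U))
    (h_holo : ∀ z ∈ U, AnalyticOnNhd ℂ (fun lam => h lam z) Λ) :
    ∃ Λ' : Set B, IsOpen Λ' ∧ (0 : B) ∈ Λ' ∧ Λ' ⊆ Λ ∧
      ∃ H : B → ℂ → ℂ,
        ContDiffOn ℝ (⊤ : ℕ∞) (fun pr : B × ℂ => H pr.1 pr.2) (Λ' ×ˢ (Set.univ : Set ℂ)) ∧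
        (∀ z : ℂ, AnalyticOnNhd ℂ (fun lam => H lam z) Λ') ∧
        (∀ z : ℂ, H 0 z = z) ∧
        (∀ lam ∈ Λ', ∃ e : ℂ ≃ ℂ, (⇑e = H lam) ∧
          ContDiff ℝ (⊤ : ℕ∞) (⇑e) ∧ ContDiff ℝ (⊤ : ℕ∞) (⇑e.symm)) ∧
        (∀ lam ∈ Λ', ∀ z ∈ Q, H lam z = h lam z) := by
  obtain ⟨K, f, hK, hKU, hf, hf1, hf0⟩ := cutoff_aux Q U hQ hUopen hQU
  set G : B × ℂ → ℂ := fun p => f p.2 • (h p.1 p.2 - p.2) with hG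
  have hGs : ∀ p : B × ℂ, p.1 ∈ Λ → ContDiffAt ℝ (⊤ : ℕ∞) G p := by
    rintro ⟨l, z⟩ hl
    by_cases hz : z ∈ U
    · have h1 := h_smooth.contDiffAt ((hΛ.prod hUopen).mem_nhds (Set.mk_mem_prod hl hz))
      exact (hf.contDiffAt.comp _ contDiffAt_snd).smul (h1.sub contDiffAt_snd)
    · have hzK : z ∉ K := fun h => hz (hKU h)
      have : G =ᶠ[nhds (l, z)] fun _ => 0 := by
        have : ∀ᶠ p : B × ℂ in nhds (l, z), p.2 ∈ Kᶜ :=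
          continuousAt_snd.eventually (hK.isClosed.isOpen_compl.mem_nhds hzK)
        filter_upwards [this] with p hp
        simp [hG, hf0 _ hp]
      exact contDiffAt_const.congr_of_eventuallyEq this
  have hG0 : ∀ z, G (0, z) = 0 := fun z => by
    by_cases hz : z ∈ U
    · simp [hG, h_id z hz]
    · simp [hG, hf0 z (fun h => hz (hKU h))]
  have hpart : ∀ p : B × ℂ, p.1 ∈ Λ → fderiv ℝ (fun z => G (p.1, z)) p.2 =
      (fderiv ℝ G p).comp (ContinuousLinearMap.inr ℝ B ℂ) := by
    rintro ⟨l, z⟩ hl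
    have h1 : HasFDerivAt G (fderiv ℝ G (l, z)) (l, z) :=
      ((hGs (l, z) hl).differentiableAt (by simp)).hasFDerivAt
    exact (h1.comp z (hasFDerivAt_prodMk_right l z)).fderiv
  have hev : ∀ᶠ l in nhds (0 : B), ∀ z ∈ K, ‖fderiv ℝ (fun z => G (l, z)) z‖ ≤ 1 / 2 := by
    refine hK.eventually_forall_of_forall_eventually
      (P := fun l z => ‖fderiv ℝ (fun z => G (l, z)) z‖ ≤ 1 / 2) (fun z _ => ?_)
    have hc : ContinuousAt (fun p => ‖(fderiv ℝ G p).comp (ContinuousLinearMap.inr ℝ B ℂ)‖)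
        ((0 : B), z) := by
      have h1 : ContinuousAt (fderiv ℝ G) ((0 : B), z) :=
        (hGs (0, z) hΛ0).continuousAt_fderiv (by simp)
      exact (h1.clm_comp continuousAt_const).norm
    have h0 : ‖(fderiv ℝ G (0, z)).comp (ContinuousLinearMap.inr ℝ B ℂ)‖ < 1 / 2 := by
      rw [← hpart (0, z) hΛ0]
      simp [hG0]
    have hl : ∀ᶠ p : B × ℂ in nhds (0, z), p.1 ∈ Λ :=
      continuousAt_fst.eventually (hΛ.mem_nhds hΛ0)
    filter_upwards [hc.eventually (gt_mem_nhds h0), hl] with p hp hpl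
    rw [hpart p hpl]
    exact hp.le
  obtain ⟨V, hV, hVo, hV0⟩ := eventually_nhds_iff.1 hev
  refine ⟨V ∩ Λ, hVo.inter hΛ, ⟨hV0, hΛ0⟩, Set.inter_subset_right,
    fun l z => z + G (l, z), ?_, ?_, ?_, ?_, ?_⟩
  · intro p hp
    exact (contDiffAt_snd.add (hGs p hp.1.2)).contDiffWithinAt
  · intro z l hl
    by_cases hz : z ∈ U
    · have h1 : AnalyticAt ℂ (fun l => h l z) l := h_holo z hz l hl.2
      have h2 : (fun l => z + G (l, z)) = fun l => z + (f z : ℂ) * (h l z - z) := by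
        ext l; simp [hG]
      rw [h2]
      exact analyticAt_const.add (analyticAt_const.mul (h1.sub analyticAt_const))
    · have h2 : (fun l => z + G (l, z)) = fun l => z := by
        ext l; simp [hG, hf0 z (fun h => hz (hKU h))]
      rw [h2]
      exact analyticAt_const
  · intro z
    simp [hG0]
  · intro l hl
    refine perturb_aux (fun z => G (l, z)) ?_ ?_
    · rw [contDiff_iff_contDiffAt]
      intro z
      exact (hGs (l, z) hl.2).comp z (contDiffAt_const.prodMk contDiffAt_id)
    · intro z
      by_cases hz : z ∈ K
      · exact hV l hl.1 z hz
      · have : (fun z => G (l, z)) =ᶠ[nhds z] fun _ => 0 := by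
          filter_upwards [hK.isClosed.isOpen_compl.mem_nhds hz] with w hw
          simp [hG, hf0 _ hw]
        rw [this.fderiv_eq]
        simp
  · intro l hl z hz
    simp [hG, hf1 z hz]
end

section
/- Hölder comparison of sup-norms of bounded holomorphic functions on nested domains (a Hadamard three-domains inequality): let V, W, U be nonempty bounded open connected and simply connected subsets of ℂ with closure(V) ⊆ W and closure(W) ⊆ U. Then there exists δ ∈ (0, 1], depending only on V, W, U, such that every holomorphic function f : U → ℂ with sup_{z ∈ U} |f(z)| ≤ 1 satisfies sup_{z ∈ W} |f(z)| ≤ (sup_{z ∈ V} |f(z)|)^δ. -/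
open Complex.HadamardThreeLines in
lemma three_disks (c : ℂ) {r s R : ℝ} (hr : 0 < r) (hrs : r < s) (hsR : s < R) :
    ∃ θ : ℝ, θ ∈ Set.Ioc (0 : ℝ) 1 ∧ ∀ F : ℂ → ℂ, DifferentiableOn ℂ F (Metric.ball c R) →
      (∀ z ∈ Metric.ball c R, ‖F z‖ ≤ 1) → ∀ m : ℝ, 0 ≤ m → m ≤ 1 →
      (∀ z ∈ Metric.ball c r, ‖F z‖ ≤ m) → ∀ z ∈ Metric.ball c s, ‖F z‖ ≤ m ^ θ := by
  have hs : 0 < s := hr.trans hrs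
  obtain ⟨l, hl⟩ : ∃ l, l = Real.log (r / 2) := ⟨_, rfl⟩
  obtain ⟨u, hu⟩ : ∃ u, u = Real.log ((s + R) / 2) := ⟨_, rfl⟩
  have hel : Real.exp l = r / 2 := by rw [hl, Real.exp_log (by positivity)]
  have heu : Real.exp u = (s + R) / 2 := by rw [hu, Real.exp_log (by linarith)]
  have hls : l < Real.log s := by
    rw [hl]; exact Real.log_lt_log (by positivity) (by linarith)
  have hsu : Real.log s < u := by
    rw [hu]; exact Real.log_lt_log hs (by linarith)
  have hlu : l < u := hls.trans hsu
  have hd0 : 0 < u - l := by linarith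
  have hθpos : 0 < 1 - (Real.log s - l) / (u - l) := by
    rw [sub_pos, div_lt_one hd0]; linarith
  have hθle : 1 - (Real.log s - l) / (u - l) ≤ 1 := by
    have : 0 ≤ (Real.log s - l) / (u - l) := div_nonneg (by linarith) hd0.le
    linarith
  refine ⟨1 - (Real.log s - l) / (u - l), ⟨hθpos, hθle⟩, ?_⟩
  intro F hF hF1 m hm0 hm1 hFm z hz
  by_cases hzr : z ∈ Metric.ball c r
  · refine (hFm z hzr).trans ?_
    calc m = m ^ (1 : ℝ) := (Real.rpow_one m).symm
      _ ≤ _ := Real.rpow_le_rpow_of_exponent_ge_of_imp hm0 hm1 hθle (by intro _ h; linarith)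
  rw [Metric.mem_ball, dist_eq_norm] at hz hzr
  push Not at hzr
  have hzc : z - c ≠ 0 := by
    intro h; rw [h, norm_zero] at hzr; linarith
  have hn : 0 < ‖z - c‖ := by linarith
  have hmem : ∀ w : ℂ, w.re ≤ u → c + Complex.exp w ∈ Metric.ball c R := by
    intro w hw
    rw [Metric.mem_ball, dist_eq_norm, add_sub_cancel_left, Complex.norm_exp]
    have := Real.exp_le_exp.2 hw
    linarith
  have hz2 : (Complex.log (z - c)).re = Real.log ‖z - c‖ := Complex.log_re _
  have h1 : l ≤ Real.log ‖z - c‖ := by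
    rw [hl]; exact Real.log_le_log (by positivity) (by linarith)
  have h2 : Real.log ‖z - c‖ ≤ Real.log s := Real.log_le_log hn hz.le
  have hcl : closure (verticalStrip l u) ⊆ verticalClosedStrip l u := by
    apply closure_minimal
    · exact Set.preimage_mono Set.Ioo_subset_Icc_self
    · exact isClosed_Icc.preimage Complex.continuous_re
  have key := norm_le_interp_of_mem_verticalClosedStrip' (f := fun w => F (c + Complex.exp w))
    (z := Complex.log (z - c)) (a := m) (b := 1) hlu
    (by change _ ∈ Set.Icc l u
        rw [hz2]; exact ⟨h1, by linarith⟩)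
    (by
      apply DifferentiableOn.diffContOnCl
      apply DifferentiableOn.comp hF (g := F) (f := fun w => c + Complex.exp w)
      · fun_prop
      · intro w hw
        exact hmem w (hcl hw).2)
    (by
      refine ⟨1, ?_⟩
      rintro _ ⟨w, hw, rfl⟩
      exact hF1 _ (hmem w hw.2))
    (by
      intro w hw
      apply hFm
      have hw : w.re = l := hw
      rw [Metric.mem_ball, dist_eq_norm, add_sub_cancel_left, Complex.norm_exp, hw, hel]
      linarith)
    (by
      intro w hw
      exact hF1 _ (hmem w (le_of_eq hw)))
  simp only [Complex.exp_log hzc, add_sub_cancel, Real.one_rpow, mul_one, hz2] at key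
  have hexp : 1 - (Real.log s - l) / (u - l) ≤ 1 - (Real.log ‖z - c‖ - l) / (u - l) := by
    gcongr
  exact key.trans (Real.rpow_le_rpow_of_exponent_ge_of_imp hm0 hm1 hexp
    (by intro _ h; linarith))

/-- `s` is controlled by `V`. -/
def Ctrl (V U s : Set ℂ) : Prop :=
  ∃ δ : ℝ, δ ∈ Set.Ioc (0 : ℝ) 1 ∧ ∀ f : ℂ → ℂ, DifferentiableOn ℂ f U →
    (∀ z ∈ U, ‖f z‖ ≤ 1) → ∀ m : ℝ, 0 ≤ m → m ≤ 1 →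
    (∀ z ∈ V, ‖f z‖ ≤ m) → ∀ z ∈ s, ‖f z‖ ≤ m ^ δ

lemma Ctrl.mono {V U s t : Set ℂ} (h : s ⊆ t) (ht : Ctrl V U t) : Ctrl V U s := by
  obtain ⟨δ, hδ, H⟩ := ht
  exact ⟨δ, hδ, fun f h1 h2 m h3 h4 h5 z hz => H f h1 h2 m h3 h4 h5 z (h hz)⟩

lemma Ctrl.union {V U s t : Set ℂ} (hs : Ctrl V U s) (ht : Ctrl V U t) : Ctrl V U (s ∪ t) := by
  obtain ⟨a, ha, H⟩ := hs
  obtain ⟨b, hb, K⟩ := ht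
  have hpos : 0 < min a b := lt_min ha.1 hb.1
  refine ⟨min a b, ⟨hpos, (min_le_left _ _).trans ha.2⟩, ?_⟩
  intro f h1 h2 m h3 h4 h5 z hz
  rcases hz with hz | hz
  · exact (H f h1 h2 m h3 h4 h5 z hz).trans (Real.rpow_le_rpow_of_exponent_ge_of_imp h3 h4
      (min_le_left _ _) (by intro _ h; linarith [ha.1]))
  · exact (K f h1 h2 m h3 h4 h5 z hz).trans (Real.rpow_le_rpow_of_exponent_ge_of_imp h3 h4
      (min_le_right _ _) (by intro _ h; linarith [hb.1]))

lemma Ctrl.base (V U : Set ℂ) : Ctrl V U V :=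
  ⟨1, ⟨one_pos, le_rfl⟩, fun f _ _ m _ _ h5 z hz => by rw [Real.rpow_one]; exact h5 z hz⟩

lemma Ctrl.step {V U : Set ℂ} {c : ℂ} {r s R : ℝ} (hr : 0 < r) (hrs : r < s) (hsR : s < R)
    (hU : Metric.ball c R ⊆ U) (h : Ctrl V U (Metric.ball c r)) :
    Ctrl V U (Metric.ball c s) := by
  obtain ⟨θ, hθ, H⟩ := three_disks c hr hrs hsR
  obtain ⟨δ, hδ, K⟩ := h
  refine ⟨δ * θ, ⟨mul_pos hδ.1 hθ.1, mul_le_one₀ hδ.2 hθ.1.le hθ.2⟩, ?_⟩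
  intro f h1 h2 m h3 h4 h5 z hz
  rw [Real.rpow_mul h3]
  exact H f (h1.mono hU) (fun z hz => h2 z (hU hz)) (m ^ δ) (Real.rpow_nonneg h3 _)
    (Real.rpow_le_one h3 h4 hδ.1.le) (K f h1 h2 m h3 h4 h5) z hz

lemma Ctrl.all {V U : Set ℂ} (hVne : V.Nonempty) (hVo : IsOpen V) (hUo : IsOpen U)
    (hVU : V ⊆ U) (hUc : IsConnected U) :
    U ⊆ {z | ∃ ρ > 0, Ctrl V U (Metric.ball z ρ)} := by
  apply hUc.isPreconnected.subset_of_closure_inter_subset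
  · rw [Metric.isOpen_iff]
    rintro z ⟨ρ, hρ, h⟩
    refine ⟨ρ, hρ, fun w hw => ?_⟩
    obtain ⟨ε, hε, hs⟩ := Metric.isOpen_iff.1 Metric.isOpen_ball w hw
    exact ⟨ε, hε, h.mono hs⟩
  · obtain ⟨v, hv⟩ := hVne
    obtain ⟨ε, hε, hs⟩ := Metric.isOpen_iff.1 hVo v hv
    exact ⟨v, hVU hv, ε, hε, (Ctrl.base V U).mono hs⟩
  · rintro z ⟨hz, hzU⟩
    obtain ⟨R, hR, hs⟩ := Metric.isOpen_iff.1 hUo z hzU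
    obtain ⟨y, ⟨ρ, hρ, hy⟩, hyz⟩ := Metric.mem_closure_iff.1 hz (R / 4) (by positivity)
    have hyz' := hyz
    rw [dist_comm] at hyz'
    refine ⟨R / 12, by positivity, ?_⟩
    have hmin : 0 < min ρ (R / 4) := lt_min hρ (by positivity)
    have := Ctrl.step (V := V) (U := U) (c := y) (r := min ρ (R / 4)) (s := R / 3) (R := R / 2)
      hmin ((min_le_right _ _).trans_lt (by linarith)) (by linarith)
      ((Metric.ball_subset_ball' (by linarith)).trans hs)
      (hy.mono (Metric.ball_subset_ball (min_le_left _ _)))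
    exact this.mono (Metric.ball_subset_ball' (by linarith))

/-- **Hölder comparison of sup-norms of bounded holomorphic functions on nested domains**
(a Hadamard three-domains inequality).  Let `V ⋐ W ⋐ U` be nonempty bounded open connected
simply connected subsets of `ℂ`.  Then there is `δ ∈ (0, 1]`, depending only on the domains,
such that every holomorphic `f : U → ℂ` with `sup_U |f| ≤ 1` satisfies
`sup_W |f| ≤ (sup_V |f|)^δ`. -/
theorem hadamard_three_domains
    (V W U : Set ℂ)
    (hVne : V.Nonempty) (hWne : W.Nonempty) (hUne : U.Nonempty)
    (hVo : IsOpen V) (hWo : IsOpen W) (hUo : IsOpen U)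
    (hVb : Bornology.IsBounded V) (hWb : Bornology.IsBounded W)
    (hUb : Bornology.IsBounded U)
    (hVc : IsConnected V) (hWc : IsConnected W) (hUc : IsConnected U)
    (hVsc : SimplyConnectedSpace V) (hWsc : SimplyConnectedSpace W)
    (hUsc : SimplyConnectedSpace U)
    (hVW : closure V ⊆ W) (hWU : closure W ⊆ U) :
    ∃ δ : ℝ, δ ∈ Set.Ioc (0 : ℝ) 1 ∧
      ∀ f : ℂ → ℂ, DifferentiableOn ℂ f U → (∀ z ∈ U, ‖f z‖ ≤ 1) →
        (⨆ z ∈ W, ‖f z‖) ≤ (⨆ z ∈ V, ‖f z‖) ^ δ := by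
  have hW1 : W ⊆ U := subset_closure.trans hWU
  have hVU : V ⊆ U := (subset_closure.trans hVW).trans hW1
  have hall := Ctrl.all hVne hVo hUo hVU hUc
  have hK : IsCompact (closure W) := hWb.isCompact_closure
  have hC : Ctrl V U (closure W) := by
    apply hK.induction_on (p := Ctrl V U)
    · exact (Ctrl.base V U).mono (Set.empty_subset _)
    · exact fun s t h ht => ht.mono h
    · exact fun s t hs ht => hs.union ht
    · intro x hx
      obtain ⟨ρ, hρ, h⟩ := hall (hWU hx)
      exact ⟨_, mem_nhdsWithin_of_mem_nhds (Metric.ball_mem_nhds x hρ), h⟩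
  obtain ⟨δ, hδ, H⟩ := hC
  refine ⟨δ, hδ, fun f hf hf1 => ?_⟩
  have hin : ∀ z, (⨆ (_ : z ∈ V), ‖f z‖) ≤ 1 := fun z =>
    Real.iSup_le (fun hz => hf1 z (hVU hz)) zero_le_one
  have h0 : 0 ≤ ⨆ z ∈ V, ‖f z‖ :=
    Real.iSup_nonneg fun z => Real.iSup_nonneg fun _ => norm_nonneg _
  have h1 : (⨆ z ∈ V, ‖f z‖) ≤ 1 := Real.iSup_le hin zero_le_one
  have h2 : ∀ z ∈ V, ‖f z‖ ≤ ⨆ z ∈ V, ‖f z‖ := by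
    intro z hz
    refine le_trans ?_ (le_ciSup (f := fun z => ⨆ (_ : z ∈ V), ‖f z‖) ⟨1, ?_⟩ z)
    · simp [hz]
    · rintro _ ⟨w, rfl⟩
      exact hin w
  have hr := Real.rpow_nonneg h0 δ
  exact Real.iSup_le (fun z => Real.iSup_le
    (fun hz => H f hf hf1 _ h0 h1 h2 z (subset_closure hz)) hr) hr
end
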